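/- Let C be a finite quotienting Boolean algebra over a finite alphabet A and let ρ : 2^{A*} → R be a nice multiplicative rating map. Then P_{BPol(C)}[ρ] = {(D,r) ∈ (A*/∼_C) × R : r ∈ I_{BPol(C)}[D, ρ]} is the greatest BPol(C)-saturated subset of (A*/∼_C) × R for ρ: it is BPol(C)-saturated, and it contains every BPol(C)-saturated subset of (A*/∼_C) × R. -/

import Mathlib

open Set

namespace Paper

abbrev Lang (A : Type) := Set (List A)
abbrev LClass (A : Type) := Set (Set (List A))

variable {A R M : Type}

/-- A lattice of languages: contains `∅` and `A*`, closed under finite union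
and finite intersection. -/
def LangLattice (𝒞 : LClass A) : Prop :=
  (∅ : Lang A) ∈ 𝒞 ∧ (Set.univ : Lang A) ∈ 𝒞 ∧
    (∀ K L : Lang A, K ∈ 𝒞 → L ∈ 𝒞 → K ∪ L ∈ 𝒞) ∧
    (∀ K L : Lang A, K ∈ 𝒞 → L ∈ 𝒞 → K ∩ L ∈ 𝒞)

/-- A Boolean algebra of languages: a lattice closed under complement. -/
def LangBoolAlg (𝒞 : LClass A) : Prop :=
  LangLattice 𝒞 ∧ ∀ L : Lang A, L ∈ 𝒞 → Lᶜ ∈ 𝒞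

/-- A class is quotient-closed when it is closed under left and right quotients
by words. -/
def QuotientClosed (𝒞 : LClass A) : Prop :=
  ∀ L ∈ 𝒞, ∀ w : List A,
    {u : List A | w ++ u ∈ L} ∈ 𝒞 ∧ {u : List A | u ++ w ∈ L} ∈ 𝒞

/-- The canonical preorder `≤_𝒞` associated with a class `𝒞`. -/
def cle (𝒞 : LClass A) (w w' : List A) : Prop := ∀ L ∈ 𝒞, w ∈ L → w' ∈ L

/-- The canonical equivalence `∼_𝒞` associated with a class `𝒞`. -/
def ceq (𝒞 : LClass A) (w w' : List A) : Prop := ∀ L ∈ 𝒞, (w ∈ L ↔ w' ∈ L)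

/-- The `∼_𝒞`-class of the word `w`. -/
def cclass (𝒞 : LClass A) (w : List A) : Lang A := {v | ceq 𝒞 w v}

/-- `D` is a `∼_𝒞`-class. -/
def IsCClass (𝒞 : LClass A) (D : Lang A) : Prop := ∃ w : List A, D = cclass 𝒞 w

/-- Multiplication of `∼_𝒞`-classes (the class of the concatenation of
representatives). -/
def cmul (𝒞 : LClass A) (D E : Lang A) : Lang A :=
  {x | ∃ u ∈ D, ∃ v ∈ E, ceq 𝒞 (u ++ v) x}

/-- Language concatenation. -/
def cat (K L : Lang A) : Lang A := {w | ∃ u ∈ K, ∃ v ∈ L, u ++ v = w}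

/-- Marked concatenation `K a L`. -/
def mcat (K : Lang A) (a : A) (L : Lang A) : Lang A :=
  {w | ∃ u ∈ K, ∃ v ∈ L, u ++ a :: v = w}

/-- Boolean closure: the least Boolean algebra containing `𝒞`. -/
def BoolC (𝒞 : LClass A) : LClass A := ⋂₀ {𝒟 : LClass A | LangBoolAlg 𝒟 ∧ 𝒞 ⊆ 𝒟}

/-- Polynomial closure: the least class containing `𝒞` closed under union and
marked concatenation. -/
def PolC (𝒞 : LClass A) : LClass A :=
  ⋂₀ {𝒟 : LClass A | 𝒞 ⊆ 𝒟 ∧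
    (∀ K L : Lang A, K ∈ 𝒟 → L ∈ 𝒟 → K ∪ L ∈ 𝒟) ∧
    (∀ (K L : Lang A) (a : A), K ∈ 𝒟 → L ∈ 𝒟 → mcat K a L ∈ 𝒟)}

/-- A cover of `L`: a finite set of languages whose union includes `L`. -/
def IsCover (Ks : LClass A) (L : Lang A) : Prop := Ks.Finite ∧ L ⊆ ⋃₀ Ks

/-- A `𝒞`-cover of `L`: a cover all of whose members belong to `𝒞`. -/
def IsCCover (𝒞 Ks : LClass A) (L : Lang A) : Prop := IsCover Ks L ∧ Ks ⊆ 𝒞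

/-- `α : A* → M` is a monoid morphism. -/
def IsMonoidMorphism [Monoid M] (α : List A → M) : Prop :=
  α [] = 1 ∧ ∀ u v : List A, α (u ++ v) = α u * α v

/-- `α` recognizes `L`. -/
def Recognizes [Monoid M] (α : List A → M) (L : Lang A) : Prop :=
  ∃ F : Set M, L = α ⁻¹' F

/-- A language is regular when it is recognized by a monoid morphism into a
finite monoid. -/
def RegularLang (L : Lang A) : Prop :=
  ∃ (N : Type) (_ : Monoid N) (_ : Finite N) (α : List A → N),
    IsMonoidMorphism α ∧ Recognizes α L

/-- The canonical order on a rating set: `r ≤ s` iff `r + s = s`. -/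
def rle [Add R] (r s : R) : Prop := r + s = s

/-- A rating map: maps `∅` to `0` and commutes with binary union. -/
def IsRatingMap [AddCommMonoid R] (ρ : Lang A → R) : Prop :=
  ρ ∅ = 0 ∧ ∀ K L : Lang A, ρ (K ∪ L) = ρ K + ρ L

/-- A nice rating map: the value of any language is a finite sum of values of
its words. -/
def IsNice [AddCommMonoid R] (ρ : Lang A → R) : Prop :=
  ∀ K : Lang A, ∃ l : List (List A), (∀ w ∈ l, w ∈ K) ∧
    ρ K = (l.map fun w => ρ {w}).sum

/-- A multiplicative rating map: also a morphism for concatenation. -/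
def IsMultiplicative [Semiring R] (ρ : Lang A → R) : Prop :=
  ρ ({[]} : Lang A) = 1 ∧ ∀ K L : Lang A, ρ (cat K L) = ρ K * ρ L

/-- An endomorphism of the additive monoid `(R, +)`. -/
def IsAddEndo [AddCommMonoid R] (γ : R → R) : Prop :=
  γ 0 = 0 ∧ ∀ r s : R, γ (r + s) = γ r + γ s

/-- A quasi-multiplicative rating map for the endomorphism `γ`. -/
def IsQuasiMult [Semiring R] (ρ : Lang A → R) (γ : R → R) : Prop :=
  IsAddEndo γ ∧ (∀ q r s : R, γ (q * γ r * s) = γ (q * r * s)) ∧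
    ∀ K L : Lang A, ρ (cat K L) = γ (ρ K * ρ L)

/-- The `ρ`-imprint of a set of languages. -/
def imprint [Add R] (ρ : Lang A → R) (Ks : LClass A) : Set R :=
  {r | ∃ K ∈ Ks, rle r (ρ K)}

/-- The `𝒟`-optimal `ρ`-imprint on `L` (the imprint of any optimal `𝒟`-cover
of `L`, i.e. the intersection of the imprints of all `𝒟`-covers of `L`). -/
def optImprint [Add R] (𝒟 : LClass A) (ρ : Lang A → R) (L : Lang A) : Set R :=
  {r | ∀ Ks : LClass A, IsCCover 𝒟 Ks L → r ∈ imprint ρ Ks}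

/-- Downset operation on subsets of a rating set. -/
def dclos [Add R] (U : Set R) : Set R := {r | ∃ s ∈ U, rle r s}

/-- Pointwise multiplication of subsets of a rating set. -/
def smul [Mul R] (U V : Set R) : Set R := {x | ∃ u ∈ U, ∃ v ∈ V, u * v = x}

/-- The auxiliary set `Rbpol(S)`: the least subset of
`(A*/∼_𝒞) × R × 2^R` containing the trivial elements and closed under extended
downset, multiplication and `S`-restricted closure. -/
inductive Rbpol [Semiring R] (𝒞 : LClass A) (ρ : Lang A → R)
    (S : Set (Lang A × R)) : Lang A → R → Set R → Prop
  | triv (w : List A) : Rbpol 𝒞 ρ S (cclass 𝒞 w) (ρ {w}) {ρ {w}}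
  | down {C' : Lang A} {q : R} {U V : Set R} :
      Rbpol 𝒞 ρ S C' q U → V ⊆ dclos U → Rbpol 𝒞 ρ S C' q V
  | mul {C' D : Lang A} {q r : R} {U V : Set R} :
      Rbpol 𝒞 ρ S C' q U → Rbpol 𝒞 ρ S D r V →
      Rbpol 𝒞 ρ S (cmul 𝒞 C' D) (q * r) (smul U V)
  | clos {E : Lang A} {f : R} {F : Set R} :
      Rbpol 𝒞 ρ S E f F → cmul 𝒞 E E = E → f * f = f → smul F F = F →
      Rbpol 𝒞 ρ S E f (smul F (smul {r : R | (E, r) ∈ S} F))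

/-- `S ⊆ (A*/∼_𝒞) × R` is `BPol(𝒞)`-saturated for `ρ`. -/
def BPolSaturated [Semiring R] (𝒞 : LClass A) (ρ : Lang A → R)
    (S : Set (Lang A × R)) : Prop :=
  (∀ p ∈ S, IsCClass 𝒞 p.1) ∧
  ∀ p ∈ S, ∃ l : List R, l ≠ [] ∧ rle p.2 l.sum ∧
    ∀ r ∈ l, Rbpol 𝒞 ρ S p.1 r {l.sum}

section Abstract

variable {B N : Type} [Monoid N]

/-- boundedness of a set of words for a cost predicate -/
def Bdd (G : ℕ → List B → Prop) (X : Set (List B)) : Prop := ∃ h, ∀ w ∈ X, G h w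

/-- star of a set of words -/
inductive Star (X : Set (List B)) : List B → Prop
  | nil : Star X []
  | snoc {u b : List B} : Star X u → b ∈ X → Star X (u ++ b)

theorem Star.app {X : Set (List B)} {u v : List B} (hu : Star X u) (hv : Star X v) :
    Star X (u ++ v) := by
  induction hv with
  | nil => simpa using hu
  | snoc _ hb ih => rw [← List.append_assoc]; exact Star.snoc ih hb

theorem Star.one {X : Set (List B)} {u : List B} (hu : u ∈ X) : Star X u := by
  simpa using Star.snoc Star.nil hu

/-- paths from state `s` whose intermediate states lie in `Y` -/
inductive Path (α : List B → N) (X : Set (List B)) (Y : Set N) (s : N) : List B → Prop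
  | single {b : List B} : b ∈ X → Path α X Y s b
  | snoc {u b : List B} : Path α X Y s u → s * α u ∈ Y → b ∈ X → Path α X Y s (u ++ b)

structure CostAx (α : List B → N) (G : ℕ → List B → Prop) : Prop where
  one : α [] = 1
  hom : ∀ u v, α (u ++ v) = α u * α v
  nil : G 0 []
  mono : ∀ {h h' w}, h ≤ h' → G h w → G h' w
  mul : ∀ {h h' u v}, G h u → G h' v → G (h + h') (u ++ v)
  idem : ∀ e : N, e * e = e → ∀ X, Bdd G X → (∀ w ∈ X, α w = e) → Bdd G {w | Star X w}

variable {α : List B → N} {G : ℕ → List B → Prop}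

theorem Bdd.mono {X Y : Set (List B)} (h : Bdd G X) (hs : Y ⊆ X) : Bdd G Y := by
  obtain ⟨n, hn⟩ := h
  exact ⟨n, fun w hw => hn w (hs hw)⟩

theorem CostAx.union (H : CostAx α G) {X Y : Set (List B)} (h : Bdd G X) (h' : Bdd G Y) :
    Bdd G (X ∪ Y) := by
  obtain ⟨n, hn⟩ := h
  obtain ⟨m, hm⟩ := h'
  refine ⟨max n m, ?_⟩
  rintro w (hw | hw)
  · exact H.mono (le_max_left _ _) (hn w hw)
  · exact H.mono (le_max_right _ _) (hm w hw)

theorem CostAx.prod (H : CostAx α G) {X Y : Set (List B)} (h : Bdd G X) (h' : Bdd G Y) :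
    Bdd G {w | ∃ u ∈ X, ∃ v ∈ Y, w = u ++ v} := by
  obtain ⟨n, hn⟩ := h
  obtain ⟨m, hm⟩ := h'
  refine ⟨n + m, ?_⟩
  rintro w ⟨u, hu, v, hv, rfl⟩
  exact H.mul (hn u hu) (hm v hv)

theorem CostAx.bnil (H : CostAx α G) : Bdd G ({[]} : Set (List B)) :=
  ⟨0, by rintro w rfl; exact H.nil⟩

/-- left zero bands -/
theorem CostAx.band (H : CostAx α G) (Z : Set N) (hZ : Z.Finite)
    (hz : ∀ x ∈ Z, ∀ y ∈ Z, x * y = x) :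
    ∀ X, Bdd G X → (∀ w ∈ X, α w ∈ Z) → Bdd G {w | Star X w} := by
  induction Z, hZ using Set.Finite.induction_on with
  | empty =>
    intro X _ hX
    refine H.bnil.mono ?_
    intro w hw
    cases hw with
    | nil => rfl
    | snoc _ hb => exact absurd (hX _ hb) (by simp)
  | @insert z Z _ _ ih =>
    intro X hB hX
    have ih' := ih (fun x hx y hy => hz x (Or.inr hx) y (Or.inr hy))
    set X' := {w ∈ X | α w ∈ Z} with hX'
    set Xz := {w ∈ X | α w = z} with hXz
    have b1 : Bdd G {w | Star X' w} := ih' X' (hB.mono (fun w hw => hw.1)) (fun w hw => hw.2)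
    have b2 := H.prod (hB.mono (show Xz ⊆ X from fun w hw => hw.1)) b1
    have hst : ∀ v, Star X' v → α v = 1 ∨ α v ∈ Z := by
      intro v hv
      induction hv with
      | nil => exact Or.inl H.one
      | @snoc u b _ hb ih2 =>
        right
        rw [H.hom]
        rcases ih2 with h | h
        · rw [h, one_mul]; exact hb.2
        · rw [hz _ (Or.inr h) _ (Or.inr hb.2)]; exact h
    have b3 := H.idem z (hz z (Or.inl rfl) z (Or.inl rfl)) _ b2 (by
      rintro w ⟨u, hu, v, hv, rfl⟩
      rw [H.hom, hu.2]
      rcases hst v hv with h | h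
      · rw [h, mul_one]
      · exact hz z (Or.inl rfl) _ (Or.inr h))
    refine (H.prod b1 b3).mono ?_
    intro w hw
    induction hw with
    | nil => exact ⟨[], Star.nil, [], Star.nil, rfl⟩
    | @snoc u b _ hb ih2 =>
      obtain ⟨p, hp, q, hq, rfl⟩ := ih2
      by_cases hbz : α b = z
      · exact ⟨p, hp, q ++ b, Star.snoc hq ⟨b, ⟨hb, hbz⟩, [], Star.nil, by simp⟩, by simp⟩
      · have hb' : b ∈ X' := ⟨hb, (hX b hb).resolve_left hbz⟩
        cases hq with
        | nil => exact ⟨p ++ b, Star.snoc hp hb', [], Star.nil, by simp⟩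
        | @snoc q1 q2 h1 h2 =>
          obtain ⟨c, hc, d, hd, rfl⟩ := h2
          exact ⟨p, hp, q1 ++ (c ++ (d ++ b)),
            Star.snoc h1 ⟨c, hc, d ++ b, Star.snoc hd hb', rfl⟩, by simp⟩

theorem Path.insert {X : Set (List B)} {Y : Set N} {p s : N} (H : CostAx α G) {w : List B}
    (h : Path α X (insert p Y) s w) :
    Path α X Y s w ∨ ∃ u v t, w = u ++ (v ++ t) ∧ Path α X Y s u ∧ s * α u = p ∧
      Star {r | Path α X Y p r ∧ p * α r = p} v ∧ Path α X Y p t := by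
  induction h with
  | single hb => exact Or.inl (Path.single hb)
  | @snoc u b hu hs hb ih =>
    rcases hs with hs | hs
    · right
      rcases ih with ih | ⟨u', v, t, rfl, h1, h2, h3, h4⟩
      · exact ⟨u, [], b, by simp, ih, hs, Star.nil, Path.single hb⟩
      · refine ⟨u', v ++ t, b, by simp, h1, h2, Star.snoc h3 ⟨h4, ?_⟩, Path.single hb⟩
        have hv : p * α v = p := by
          clear hs hu
          induction h3 with
          | nil => rw [H.one, mul_one]
          | snoc _ hb ih => rw [H.hom, ← mul_assoc, ih, hb.2]
        rw [H.hom, H.hom, ← mul_assoc, ← mul_assoc, h2, hv] at hs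
        exact hs
    · rcases ih with ih | ⟨u', v, t, rfl, h1, h2, h3, h4⟩
      · exact Or.inl (Path.snoc ih hs hb)
      · right
        refine ⟨u', v, t ++ b, by simp, h1, h2, h3, Path.snoc h4 ?_ hb⟩
        have hv : p * α v = p := by
          clear hs hu
          induction h3 with
          | nil => rw [H.one, mul_one]
          | snoc _ hb ih => rw [H.hom, ← mul_assoc, ih, hb.2]
        rw [H.hom, H.hom, ← mul_assoc, ← mul_assoc, h2, hv] at hs
        exact hs

theorem Path.val {X : Set (List B)} {Y S : Set N} {s : N} (H : CostAx α G)
    (hS : ∀ x ∈ S, ∀ y ∈ S, x * y ∈ S) (hX : ∀ w ∈ X, α w ∈ S) {w : List B}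
    (h : Path α X Y s w) : α w ∈ S := by
  induction h with
  | single hb => exact hX _ hb
  | snoc _ _ hb ih => rw [H.hom]; exact hS _ ih _ (hX _ hb)

theorem CostAx.main (H : CostAx α G) [Finite N] (n : ℕ) : ∀ (S : Set N), S.ncard ≤ n →
    (∀ x ∈ S, ∀ y ∈ S, x * y ∈ S) →
    ∀ X, Bdd G X → (∀ w ∈ X, α w ∈ S) → Bdd G {w | Star X w} := by
  induction n with
  | zero =>
    intro S hn _ X hB hX
    have : S = ∅ := by
      have := Set.ncard_eq_zero (s := S) (Set.toFinite S)
      exact this.1 (by omega)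
    subst this
    exact H.band ∅ Set.finite_empty (by simp) X hB hX
  | succ n ih =>
    intro S hn hS X hB hX
    set Z := {z ∈ S | ∀ x ∈ S, z * x = z} with hZ
    have kle : ∀ Y : Set N, Y ⊆ S \ Z → ∀ s, Bdd G {w | Path α X Y s w} := by
      intro Y
      induction Y, Set.toFinite Y using Set.Finite.induction_on with
      | empty =>
        intro _ s
        refine hB.mono ?_
        intro w hw
        cases hw with
        | single hb => exact hb
        | snoc _ h _ => exact absurd h (by simp)
      | @insert p Y _ _ ihY =>
        intro hY s
        have ihY' := ihY (fun y hy => hY (Or.inr hy))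
        have hp : p ∈ S \ Z := hY (Or.inl rfl)
        have hret : Bdd G {w | Star {r | Path α X Y p r ∧ p * α r = p} w} := by
          refine ih {x ∈ S | p * x = p} ?_ ?_ _ ((ihY' p).mono (fun w hw => hw.1)) ?_
          · have hlt : {x ∈ S | p * x = p} ⊂ S := by
              refine ⟨fun x hx => hx.1, fun hsub => hp.2 ⟨hp.1, fun x hx => (hsub hx).2⟩⟩
            have := Set.ncard_lt_ncard hlt (Set.toFinite S)
            omega
          · rintro x ⟨hx, hx'⟩ y ⟨hy, hy'⟩
            exact ⟨hS x hx y hy, by rw [← mul_assoc, hx', hy']⟩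
          · rintro w ⟨hw, hw'⟩
            exact ⟨hw.val H hS hX, hw'⟩
        refine (H.union (ihY' s) (H.prod (ihY' s) (H.prod hret (ihY' p)))).mono ?_
        intro w hw
        rcases Path.insert H hw with h | ⟨u, v, t, rfl, h1, h2, h3, h4⟩
        · exact Or.inl h
        · exact Or.inr ⟨u, h1, _, ⟨v, h3, t, h4, rfl⟩, rfl⟩
    have b1 := kle (S \ Z) subset_rfl 1
    have b2 := H.band Z (Set.toFinite Z) (fun x hx y hy => hx.2 y hy.1)
      {w | Path α X (S \ Z) 1 w ∧ α w ∈ Z} (b1.mono (fun w hw => hw.1)) (fun w hw => hw.2)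
    refine (H.prod b2 (H.union H.bnil
      (b1.mono (show {w | Path α X (S \ Z) 1 w ∧ α w ∉ Z} ⊆ _ from fun w hw => hw.1)))).mono ?_
    intro w hw
    induction hw with
    | nil => exact ⟨[], Star.nil, [], Or.inl rfl, rfl⟩
    | @snoc u b _ hb ih2 =>
      obtain ⟨p, hp, q, hq, rfl⟩ := ih2
      have hq' : Path α X (S \ Z) 1 (q ++ b) := by
        rcases hq with rfl | ⟨h1, h2⟩
        · exact Path.single hb
        · exact Path.snoc h1 (by rw [one_mul]; exact ⟨h1.val H hS hX, h2⟩) hb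
      by_cases hz : α (q ++ b) ∈ Z
      · exact ⟨p ++ (q ++ b), Star.snoc hp ⟨hq', hz⟩, [], Or.inl rfl, by simp⟩
      · exact ⟨p, hp, q ++ b, Or.inr ⟨hq', hz⟩, by simp⟩

theorem CostAx.all (H : CostAx α G) [Finite N] (hl : ∀ a : B, G 1 [a]) :
    ∃ h, ∀ w, G h w := by
  obtain ⟨h, hh⟩ := H.main (Set.univ : Set N).ncard Set.univ le_rfl (by simp)
    {w | ∃ a : B, w = [a]} ⟨1, by rintro w ⟨a, rfl⟩; exact hl a⟩ (by simp)
  refine ⟨h, fun w => hh w ?_⟩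
  induction w using List.reverseRecOn with
  | nil => exact Star.nil
  | append_singleton u a ih => exact Star.snoc ih ⟨a, rfl⟩

/-- Ramsey: long sequences contain an idempotent factor. -/
theorem idem_factor (N : Type) [Monoid N] [Finite N] : ∃ c : ℕ, ∀ l : List N, c ≤ l.length →
    ∃ X Y Z, l = X ++ Y ++ Z ∧ Y ≠ [] ∧ Y.length ≤ c ∧ Y.prod * Y.prod = Y.prod := by
  let G : ℕ → List N → Prop := fun h w => w.length ≤ h ∨
    ∃ X Y Z, w = X ++ Y ++ Z ∧ Y ≠ [] ∧ Y.prod * Y.prod = Y.prod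
  have H : CostAx (List.prod : List N → N) G := by
    refine ⟨rfl, fun u v => List.prod_append, Or.inl le_rfl, ?_, ?_, ?_⟩
    · rintro h h' w hh (hw | hw)
      · exact Or.inl (hw.trans hh)
      · exact Or.inr hw
    · rintro h h' u v (hu | ⟨X, Y, Z, rfl, h2, h3⟩) hv
      · rcases hv with hv | ⟨X, Y, Z, rfl, h2, h3⟩
        · left; simp; omega
        · exact Or.inr ⟨u ++ X, Y, Z, by simp, h2, h3⟩
      · exact Or.inr ⟨X, Y, Z ++ v, by simp, h2, h3⟩
    · intro e he X _ hX
      refine ⟨0, fun w hw => ?_⟩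
      induction hw with
      | nil => exact Or.inl le_rfl
      | @snoc u b _ hb ih =>
        by_cases hb0 : b = []
        · subst hb0; simpa using ih
        · exact Or.inr ⟨u, b, [], by simp, hb0, by rw [hX b hb, he]⟩
  obtain ⟨h, hh⟩ := H.all (fun a => Or.inl (by simp))
  refine ⟨h + 1, fun l hl => ?_⟩
  rcases hh (l.take (h + 1)) with h1 | ⟨X, Y, Z, h1, h2, h3⟩
  · simp at h1; omega
  · refine ⟨X, Y, Z ++ l.drop (h + 1), ?_, h2, ?_, h3⟩
    · rw [← List.append_assoc, ← h1, List.take_append_drop]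
    · have := congrArg List.length h1
      simp at this; omega

end Abstract

section Basics

structure Hyp [Semiring R] (𝒞 : LClass A) (ρ : Lang A → R) : Prop where
  idem : ∀ r : R, r + r = r
  fin : 𝒞.Finite
  ba : LangBoolAlg 𝒞
  qc : QuotientClosed 𝒞
  rho : IsRatingMap ρ
  mult : IsMultiplicative ρ
  nice : IsNice ρ

theorem fin_sInter {𝒟 : LClass A} (h1 : Set.univ ∈ 𝒟)
    (h2 : ∀ K L : Lang A, K ∈ 𝒟 → L ∈ 𝒟 → K ∩ L ∈ 𝒟) (s : Set (Lang A)) (hs : s.Finite)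
    (hsub : s ⊆ 𝒟) : ⋂₀ s ∈ 𝒟 := by
  induction s, hs using Set.Finite.induction_on with
  | empty => simpa using h1
  | insert _ _ ih =>
    rw [Set.sInter_insert]
    exact h2 _ _ (hsub (Or.inl rfl)) (ih (fun x hx => hsub (Or.inr hx)))

theorem fin_sUnion {𝒟 : LClass A} (h1 : ∅ ∈ 𝒟)
    (h2 : ∀ K L : Lang A, K ∈ 𝒟 → L ∈ 𝒟 → K ∪ L ∈ 𝒟) (s : Set (Lang A)) (hs : s.Finite)
    (hsub : s ⊆ 𝒟) : ⋃₀ s ∈ 𝒟 := by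
  induction s, hs using Set.Finite.induction_on with
  | empty => simpa using h1
  | insert _ _ ih =>
    rw [Set.sUnion_insert]
    exact h2 _ _ (hsub (Or.inl rfl)) (ih (fun x hx => hsub (Or.inr hx)))

theorem ceq.rfl' {𝒞 : LClass A} {w : List A} : ceq 𝒞 w w := fun _ _ => Iff.rfl
theorem ceq.symm' {𝒞 : LClass A} {w v : List A} (h : ceq 𝒞 w v) : ceq 𝒞 v w :=
  fun L hL => (h L hL).symm
theorem ceq.trans' {𝒞 : LClass A} {w v u : List A} (h : ceq 𝒞 w v) (h' : ceq 𝒞 v u) :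
    ceq 𝒞 w u := fun L hL => (h L hL).trans (h' L hL)

theorem ceq_app {𝒞 : LClass A} (hqc : QuotientClosed 𝒞) {u u' v v' : List A}
    (h : ceq 𝒞 u u') (h' : ceq 𝒞 v v') : ceq 𝒞 (u ++ v) (u' ++ v') := by
  intro L hL
  exact (h' _ (hqc L hL u).1).trans (h _ (hqc L hL v').2)

theorem cclass_eq {𝒞 : LClass A} {u v : List A} (h : ceq 𝒞 u v) : cclass 𝒞 u = cclass 𝒞 v := by
  ext x
  exact ⟨fun hx => h.symm'.trans' hx, fun hx => h.trans' hx⟩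

theorem ceq_of_cclass {𝒞 : LClass A} {u v : List A} (h : cclass 𝒞 u = cclass 𝒞 v) :
    ceq 𝒞 u v := by
  have : v ∈ cclass 𝒞 u := by rw [h]; exact ceq.rfl'
  exact this

theorem cmul_cclass {𝒞 : LClass A} (hqc : QuotientClosed 𝒞) (u v : List A) :
    cmul 𝒞 (cclass 𝒞 u) (cclass 𝒞 v) = cclass 𝒞 (u ++ v) := by
  ext x
  constructor
  · rintro ⟨u', hu, v', hv, h⟩
    exact (ceq_app hqc hu hv).trans' h
  · intro h
    exact ⟨u, ceq.rfl', v, ceq.rfl', h⟩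

theorem cclass_mem {𝒞 : LClass A} (hfin : 𝒞.Finite) (hba : LangBoolAlg 𝒞) (w : List A) :
    cclass 𝒞 w ∈ 𝒞 := by
  have : cclass 𝒞 w = ⋂₀ {X ∈ 𝒞 | w ∈ X} := by
    ext v
    constructor
    · rintro h X ⟨hX, hw⟩
      exact (h X hX).1 hw
    · intro h L hL
      by_cases hw : w ∈ L
      · exact ⟨fun _ => h L ⟨hL, hw⟩, fun _ => hw⟩
      · have := h Lᶜ ⟨hba.2 L hL, hw⟩
        exact ⟨fun h => absurd h hw, fun h => absurd h this⟩
  rw [this]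
  exact fin_sInter hba.1.2.1 hba.1.2.2.2 _ (hfin.subset (fun x hx => hx.1)) (fun x hx => hx.1)

/-! Polynomial closure -/

theorem PolC.base {𝒞 : LClass A} {K : Lang A} (h : K ∈ 𝒞) : K ∈ PolC 𝒞 :=
  fun _ hD => hD.1 h
theorem PolC.union {𝒞 : LClass A} {K L : Lang A} (h : K ∈ PolC 𝒞) (h' : L ∈ PolC 𝒞) :
    K ∪ L ∈ PolC 𝒞 := fun D hD => hD.2.1 _ _ (h D hD) (h' D hD)
theorem PolC.mcat {𝒞 : LClass A} {K L : Lang A} (a : A) (h : K ∈ PolC 𝒞) (h' : L ∈ PolC 𝒞) :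
    mcat K a L ∈ PolC 𝒞 := fun D hD => hD.2.2 _ _ a (h D hD) (h' D hD)
theorem PolC.ind {𝒞 : LClass A} (Q : Lang A → Prop) (h1 : ∀ K ∈ 𝒞, Q K)
    (h2 : ∀ K L, Q K → Q L → Q (K ∪ L)) (h3 : ∀ K L a, Q K → Q L → Q (Paper.mcat K a L))
    {K : Lang A} (hK : K ∈ PolC 𝒞) : Q K :=
  hK {K | Q K} ⟨h1, h2, h3⟩

/-- Language of a pattern. -/
def plang : List (Lang A × A) → Lang A → Lang A
  | [], E => E
  | (D, a) :: l, E => mcat D a (plang l E)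

theorem plang_append (l l' : List (Lang A × A)) (E : Lang A) :
    plang (l ++ l') E = plang l (plang l' E) := by
  induction l with
  | nil => rfl
  | cons p l ih => simp [plang, ih]

/-- pattern languages over `𝒞` -/
inductive Pat (𝒞 : LClass A) : ℕ → Lang A → Prop
  | base {E : Lang A} : E ∈ 𝒞 → Pat 𝒞 0 E
  | cons {n : ℕ} {D L : Lang A} (a : A) : D ∈ 𝒞 → Pat 𝒞 n L → Pat 𝒞 (n + 1) (mcat D a L)

theorem Pat.pol {𝒞 : LClass A} {n : ℕ} {L : Lang A} (h : Pat 𝒞 n L) : L ∈ PolC 𝒞 := by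
  induction h with
  | base h => exact PolC.base h
  | cons a hD _ ih => exact PolC.mcat a (PolC.base hD) ih

theorem base_inter_pol {𝒞 : LClass A} (hfin : 𝒞.Finite) (hba : LangBoolAlg 𝒞)
    (hqc : QuotientClosed 𝒞) {n : ℕ} {L : Lang A} (h : Pat 𝒞 n L) :
    ∀ E ∈ 𝒞, L ∩ E ∈ PolC 𝒞 := by
  induction h with
  | base h => intro E hE; exact PolC.base (hba.1.2.2.2 _ _ h hE)
  | @cons n D L a hD _ ih =>
    intro E hE
    have : mcat D a L ∩ E = ⋃₀ {X | ∃ u, X = mcat (D ∩ cclass 𝒞 u) a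
        (L ∩ {v | (u ++ [a]) ++ v ∈ E})} := by
      ext w
      constructor
      · rintro ⟨⟨u, hu, v, hv, rfl⟩, hE'⟩
        exact ⟨_, ⟨u, rfl⟩, u, ⟨hu, ceq.rfl'⟩, v, ⟨hv, by simpa using hE'⟩, rfl⟩
      · rintro ⟨_, ⟨u0, rfl⟩, u, ⟨hu, hu'⟩, v, ⟨hv, hv'⟩, rfl⟩
        refine ⟨⟨u, hu, v, hv, rfl⟩, ?_⟩
        have := (ceq_app hqc hu' (ceq.rfl' (w := a :: v)) E hE).1 (by simpa using hv')
        exact this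
    rw [this]
    refine fin_sUnion (PolC.base hba.1.1) (fun _ _ => PolC.union) _ ?_ ?_
    · refine (Set.Finite.image2 (fun X Y => mcat (D ∩ X) a (L ∩ Y)) hfin hfin).subset ?_
      rintro _ ⟨u, rfl⟩
      exact ⟨_, cclass_mem hfin hba u, _, (hqc E hE (u ++ [a])).1, rfl⟩
    · rintro _ ⟨u, rfl⟩
      exact PolC.mcat a (PolC.base (hba.1.2.2.2 _ _ hD (cclass_mem hfin hba u)))
        (ih _ (hqc E hE (u ++ [a])).1)

theorem pat_inter {𝒞 : LClass A} (hfin : 𝒞.Finite) (hba : LangBoolAlg 𝒞)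
    (hqc : QuotientClosed 𝒞) (m : ℕ) : ∀ (n n' : ℕ) (K L : Lang A), n + n' ≤ m →
    Pat 𝒞 n K → Pat 𝒞 n' L → K ∩ L ∈ PolC 𝒞 := by
  induction m with
  | zero =>
    intro n n' K L hm hK hL
    obtain ⟨rfl, rfl⟩ : n = 0 ∧ n' = 0 := by omega
    cases hK with
    | base h => rw [Set.inter_comm]; exact base_inter_pol hfin hba hqc hL _ h
  | succ m ih =>
    intro n n' K L hm hK hL
    cases hK with
    | base h => rw [Set.inter_comm]; exact base_inter_pol hfin hba hqc hL _ h
    | @cons n D K a hD hK =>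
    cases hL with
    | base h => exact base_inter_pol hfin hba hqc (Pat.cons a hD hK) _ h
    | @cons n' D' L b hD' hL =>
    have key : mcat D a K ∩ mcat D' b L =
        ({w | a = b ∧ w ∈ mcat (D ∩ D') a (K ∩ L)} ∪
        ⋃₀ {X | ∃ x, X = mcat (D ∩ {u | u ++ (a :: x) ∈ D'}) a (K ∩ mcat (cclass 𝒞 x) b L)}) ∪
        ⋃₀ {X | ∃ x, X = mcat (D' ∩ {u | u ++ (b :: x) ∈ D}) b
          (mcat (cclass 𝒞 x) a K ∩ L)} := by
      ext w
      constructor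
      · rintro ⟨⟨u, hu, v, hv, rfl⟩, u', hu', v', hv', he⟩
        rcases List.append_eq_append_iff.1 he with ⟨x, h1, h2⟩ | ⟨x, h1, h2⟩
        · cases x with
          | nil =>
            simp at h1 h2
            obtain ⟨rfl, rfl⟩ := h2
            subst h1
            exact Or.inl (Or.inl ⟨rfl, u, ⟨hu, hu'⟩, v', ⟨hv, hv'⟩, rfl⟩)
          | cons c x =>
            simp at h2
            obtain ⟨rfl, rfl⟩ := h2
            subst h1
            refine Or.inr ⟨_, ⟨x, rfl⟩, u', ⟨hu', hu⟩, x ++ a :: v,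
              ⟨⟨x, ceq.rfl', v, hv, rfl⟩, hv'⟩, by simp⟩
        · cases x with
          | nil =>
            simp at h1 h2
            obtain ⟨rfl, rfl⟩ := h2
            subst h1
            exact Or.inl (Or.inl ⟨rfl, u', ⟨hu, hu'⟩, v, ⟨hv, hv'⟩, rfl⟩)
          | cons c x =>
            simp at h2
            obtain ⟨rfl, rfl⟩ := h2
            subst h1
            refine Or.inl (Or.inr ⟨_, ⟨x, rfl⟩, u, ⟨hu, hu'⟩, x ++ b :: v',
              ⟨hv, ⟨x, ceq.rfl', v', hv', rfl⟩⟩, by simp⟩)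
      · rintro ((⟨rfl, u, ⟨hu, hu'⟩, v, ⟨hv, hv'⟩, rfl⟩ | ⟨_, ⟨x0, rfl⟩, u, ⟨hu, hu'⟩, v,
          ⟨hv, ⟨x, hx, v', hv', rfl⟩⟩, rfl⟩) | ⟨_, ⟨x0, rfl⟩, u, ⟨hu, hu'⟩, v,
          ⟨⟨x, hx, v', hv', rfl⟩, hv⟩, rfl⟩)
        · exact ⟨⟨u, hu, v, hv, rfl⟩, ⟨u, hu', v, hv', rfl⟩⟩
        · refine ⟨⟨u, hu, _, hv, rfl⟩, ⟨u ++ a :: x, ?_, v', hv', by simp⟩⟩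
          have := (ceq_app hqc (ceq.rfl' (w := u ++ [a])) hx D' hD').1 (by simpa using hu')
          simpa using this
        · refine ⟨⟨u ++ b :: x, ?_, v', hv', by simp⟩, ⟨u, hu, _, hv, rfl⟩⟩
          have := (ceq_app hqc (ceq.rfl' (w := u ++ [b])) hx D hD).1 (by simpa using hu')
          simpa using this
    rw [key]
    refine PolC.union (PolC.union ?_ ?_) ?_
    · by_cases hab : a = b
      · simp only [hab, true_and]
        exact PolC.mcat b (PolC.base (hba.1.2.2.2 _ _ hD hD')) (ih n n' K L (by omega) hK hL)
      · simp only [hab, false_and]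
        exact PolC.base hba.1.1
    · refine fin_sUnion (PolC.base hba.1.1) (fun _ _ => PolC.union) _ ?_ ?_
      · refine (Set.Finite.image2 (fun X Y => mcat (D ∩ X) a (K ∩ mcat Y b L)) hfin hfin).subset ?_
        rintro _ ⟨x, rfl⟩
        exact ⟨_, (hqc D' hD' (a :: x)).2, _, cclass_mem hfin hba x, rfl⟩
      · rintro _ ⟨x, rfl⟩
        exact PolC.mcat a (PolC.base (hba.1.2.2.2 _ _ hD (hqc D' hD' (a :: x)).2))
          (ih _ _ _ _ (by omega) hK (Pat.cons b (cclass_mem hfin hba x) hL))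
    · refine fin_sUnion (PolC.base hba.1.1) (fun _ _ => PolC.union) _ ?_ ?_
      · refine (Set.Finite.image2 (fun X Y => mcat (D' ∩ X) b (mcat Y a K ∩ L)) hfin hfin).subset ?_
        rintro _ ⟨x, rfl⟩
        exact ⟨_, (hqc D hD (b :: x)).2, _, cclass_mem hfin hba x, rfl⟩
      · rintro _ ⟨x, rfl⟩
        exact PolC.mcat b (PolC.base (hba.1.2.2.2 _ _ hD' (hqc D hD (b :: x)).2))
          (ih _ _ _ _ (by omega) (Pat.cons a (cclass_mem hfin hba x) hK) hL)

/-- finite unions of patterns -/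
def UPat (𝒞 : LClass A) (K : Lang A) : Prop :=
  ∃ s : Set (Lang A), s.Finite ∧ (∀ X ∈ s, ∃ n, Pat 𝒞 n X) ∧ K = ⋃₀ s

theorem Pat.mc {𝒞 : LClass A} (hfin : 𝒞.Finite) (hba : LangBoolAlg 𝒞) {n m : ℕ} {K L : Lang A}
    (a : A) (hK : Pat 𝒞 n K) (hL : Pat 𝒞 m L) : ∃ k, Pat 𝒞 k (mcat K a L) := by
  induction hK with
  | base h => exact ⟨_, Pat.cons a h hL⟩
  | @cons n D K' b hD _ ih =>
    obtain ⟨k, hk⟩ := ih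
    refine ⟨k + 1, ?_⟩
    have : mcat (mcat D b K') a L = mcat D b (mcat K' a L) := by
      ext w
      constructor
      · rintro ⟨_, ⟨u, hu, v, hv, rfl⟩, t, ht, rfl⟩
        exact ⟨u, hu, _, ⟨v, hv, t, ht, rfl⟩, by simp⟩
      · rintro ⟨u, hu, _, ⟨v, hv, t, ht, rfl⟩, rfl⟩
        exact ⟨_, ⟨u, hu, v, hv, rfl⟩, t, ht, by simp⟩
    rw [this]
    exact Pat.cons b hD hk

theorem UPat.of_pol {𝒞 : LClass A} (hfin : 𝒞.Finite) (hba : LangBoolAlg 𝒞) {K : Lang A}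
    (h : K ∈ PolC 𝒞) : UPat 𝒞 K := by
  refine PolC.ind (UPat 𝒞) ?_ ?_ ?_ h
  · intro K hK
    exact ⟨{K}, Set.finite_singleton K, by rintro X rfl; exact ⟨0, Pat.base hK⟩, by simp⟩
  · rintro _ _ ⟨s, hs, hs', rfl⟩ ⟨t, ht, ht', rfl⟩
    refine ⟨s ∪ t, hs.union ht, ?_, by rw [Set.sUnion_union]⟩
    rintro X (hX | hX)
    · exact hs' X hX
    · exact ht' X hX
  · rintro _ _ a ⟨s, hs, hs', rfl⟩ ⟨t, ht, ht', rfl⟩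
    refine ⟨Set.image2 (fun X Y => Paper.mcat X a Y) s t, hs.image2 _ ht, ?_, ?_⟩
    · rintro _ ⟨X, hX, Y, hY, rfl⟩
      obtain ⟨n, hn⟩ := hs' X hX
      obtain ⟨m, hm⟩ := ht' Y hY
      exact Pat.mc hfin hba a hn hm
    · ext w
      constructor
      · rintro ⟨u, ⟨X, hX, hu⟩, v, ⟨Y, hY, hv⟩, rfl⟩
        exact ⟨_, ⟨X, hX, Y, hY, rfl⟩, u, hu, v, hv, rfl⟩
      · rintro ⟨_, ⟨X, hX, Y, hY, rfl⟩, u, hu, v, hv, rfl⟩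
        exact ⟨u, ⟨X, hX, hu⟩, v, ⟨Y, hY, hv⟩, rfl⟩

theorem PolC.inter {𝒞 : LClass A} (hfin : 𝒞.Finite) (hba : LangBoolAlg 𝒞)
    (hqc : QuotientClosed 𝒞) {K L : Lang A} (hK : K ∈ PolC 𝒞) (hL : L ∈ PolC 𝒞) :
    K ∩ L ∈ PolC 𝒞 := by
  obtain ⟨s, hs, hs', rfl⟩ := UPat.of_pol hfin hba hK
  obtain ⟨t, ht, ht', rfl⟩ := UPat.of_pol hfin hba hL
  have : ⋃₀ s ∩ ⋃₀ t = ⋃₀ (Set.image2 (fun X Y => X ∩ Y) s t) := by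
    ext w
    constructor
    · rintro ⟨⟨X, hX, hx⟩, ⟨Y, hY, hy⟩⟩
      exact ⟨_, ⟨X, hX, Y, hY, rfl⟩, hx, hy⟩
    · rintro ⟨_, ⟨X, hX, Y, hY, rfl⟩, hx, hy⟩
      exact ⟨⟨X, hX, hx⟩, ⟨Y, hY, hy⟩⟩
  rw [this]
  refine fin_sUnion (PolC.base hba.1.1) (fun _ _ => PolC.union) _ (hs.image2 _ ht) ?_
  rintro _ ⟨X, hX, Y, hY, rfl⟩
  obtain ⟨n, hn⟩ := hs' X hX
  obtain ⟨m, hm⟩ := ht' Y hY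
  exact pat_inter hfin hba hqc _ n m X Y le_rfl hn hm

/-! The stratifying preorders -/

def le (𝒞 : LClass A) : ℕ → List A → List A → Prop
  | 0, w, w' => ceq 𝒞 w w'
  | k + 1, w, w' => le 𝒞 k w w' ∧ ∀ u a v, u ++ a :: v = w →
      ∃ u' v', u' ++ a :: v' = w' ∧ le 𝒞 k u u' ∧ le 𝒞 k v v'

theorem le.refl {𝒞 : LClass A} {k : ℕ} : ∀ {w : List A}, le 𝒞 k w w := by
  induction k with
  | zero => intro w; exact ceq.rfl'
  | succ k ih => intro w; exact ⟨ih, fun u a v h => ⟨u, v, h, ih, ih⟩⟩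

theorem le.trans {𝒞 : LClass A} {k : ℕ} : ∀ {w v u : List A}, le 𝒞 k w v → le 𝒞 k v u →
    le 𝒞 k w u := by
  induction k with
  | zero => intro w v u h h'; exact ceq.trans' h h'
  | succ k ih =>
    intro w v u h h'
    refine ⟨ih h.1 h'.1, fun x a y hxy => ?_⟩
    obtain ⟨x1, y1, h1, h2, h3⟩ := h.2 x a y hxy
    obtain ⟨x2, y2, h4, h5, h6⟩ := h'.2 x1 a y1 h1
    exact ⟨x2, y2, h4, ih h2 h5, ih h3 h6⟩

theorem le.anti {𝒞 : LClass A} {k m : ℕ} (hkm : k ≤ m) {w v : List A} (h : le 𝒞 m w v) :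
    le 𝒞 k w v := by
  induction m, hkm using Nat.le_induction with
  | base => exact h
  | succ m _ ih => exact ih h.1

theorem le.ceq {𝒞 : LClass A} {k : ℕ} {w v : List A} (h : le 𝒞 k w v) : ceq 𝒞 w v :=
  le.anti (Nat.zero_le k) h

theorem le.app {𝒞 : LClass A} (hqc : QuotientClosed 𝒞) {k : ℕ} : ∀ {u u' v v' : List A},
    le 𝒞 k u u' → le 𝒞 k v v' → le 𝒞 k (u ++ v) (u' ++ v') := by
  induction k with
  | zero => intro u u' v v' h h'; exact ceq_app hqc h h'
  | succ k ih =>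
    intro u u' v v' h h'
    refine ⟨ih h.1 h'.1, fun x a y hxy => ?_⟩
    rcases List.append_eq_append_iff.1 hxy with ⟨z, h1, h2⟩ | ⟨z, h1, h2⟩
    · cases z with
      | nil =>
        simp at h1 h2
        obtain ⟨x1, y1, h3, h4, h5⟩ := h'.2 [] a y h2
        refine ⟨u' ++ x1, y1, by simp [h3], ?_, h5⟩
        have := ih h.1 h4
        rw [← h1]; simpa using this
      | cons b z =>
        simp at h2
        obtain ⟨rfl, rfl⟩ := h2
        obtain ⟨x1, y1, h3, h4, h5⟩ := h.2 x a z h1.symm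
        exact ⟨x1, y1 ++ v', by simp [← h3], h4, ih h5 h'.1⟩
    · obtain ⟨x1, y1, h3, h4, h5⟩ := h'.2 z a y h2.symm
      exact ⟨u' ++ x1, y1, by simp [h3], by rw [h1]; exact ih h.1 h4, h5⟩

def up (𝒞 : LClass A) (k : ℕ) (w : List A) : Lang A := {v | le 𝒞 k w v}

theorem fact_finite [Finite A] (w : List A) :
    {p : List A × A × List A | p.1 ++ p.2.1 :: p.2.2 = w}.Finite := by
  refine ((List.finite_length_le A w.length).prod
    ((Set.toFinite (Set.univ : Set A)).prod (List.finite_length_le A w.length))).subset ?_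
  rintro ⟨u, a, v⟩ h
  have := congrArg List.length h
  simp at this
  refine ⟨?_, Set.mem_univ _, ?_⟩ <;> simp <;> omega

theorem up_succ (𝒞 : LClass A) (k : ℕ) (w : List A) :
    up 𝒞 (k + 1) w = ⋂₀ (insert (up 𝒞 k w) ((fun p : Lang A × A × Lang A => mcat p.1 p.2.1 p.2.2) ''
      ((fun p : List A × A × List A => (up 𝒞 k p.1, p.2.1, up 𝒞 k p.2.2)) ''
      {p | p.1 ++ p.2.1 :: p.2.2 = w}))) := by
  ext v
  constructor
  · intro h X hX
    rcases hX with rfl | ⟨_, ⟨⟨x, a, y⟩, hp, rfl⟩, rfl⟩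
    · exact h.1
    · obtain ⟨x1, y1, h1, h2, h3⟩ := h.2 x a y hp
      exact ⟨x1, h2, y1, h3, h1⟩
  · intro h
    refine ⟨h _ (Or.inl rfl), fun x a y hxy => ?_⟩
    obtain ⟨x1, h1, y1, h2, h3⟩ := h _ (Or.inr ⟨_, ⟨(x, a, y), hxy, rfl⟩, rfl⟩)
    exact ⟨x1, y1, h3, h1, h2⟩

theorem up_pol [Finite A] {𝒞 : LClass A} (hfin : 𝒞.Finite) (hba : LangBoolAlg 𝒞)
    (hqc : QuotientClosed 𝒞) (k : ℕ) : ∀ w, up 𝒞 k w ∈ PolC 𝒞 := by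
  induction k with
  | zero => intro w; exact PolC.base (cclass_mem hfin hba w)
  | succ k ih =>
    intro w
    rw [up_succ]
    refine fin_sInter (PolC.base hba.1.2.1) (fun _ _ => PolC.inter hfin hba hqc) _
      ((((fact_finite w).image _).image _).insert _) ?_
    rintro X (rfl | ⟨_, ⟨⟨x, a, y⟩, hp, rfl⟩, rfl⟩)
    · exact ih w
    · exact PolC.mcat a (ih x) (ih y)

theorem up_finite [Finite A] {𝒞 : LClass A} (hfin : 𝒞.Finite) (hba : LangBoolAlg 𝒞)
    (k : ℕ) : (Set.range (up 𝒞 k)).Finite := by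
  induction k with
  | zero =>
    refine hfin.subset ?_
    rintro _ ⟨w, rfl⟩
    exact cclass_mem hfin hba w
  | succ k ih =>
    have hf : (𝒫 ((Set.range (up 𝒞 k)) ×ˢ ((Set.univ : Set A) ×ˢ (Set.range (up 𝒞 k))))).Finite :=
      (ih.prod ((Set.toFinite _).prod ih)).finite_subsets
    refine (Set.Finite.image2 (fun X Y => ⋂₀ (insert X
      ((fun p : Lang A × A × Lang A => mcat p.1 p.2.1 p.2.2) '' Y))) ih hf).subset ?_
    rintro _ ⟨w, rfl⟩
    rw [up_succ]
    refine ⟨_, ⟨w, rfl⟩, _, ?_, rfl⟩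
    rintro _ ⟨⟨x, a, y⟩, _, rfl⟩
    exact ⟨⟨x, rfl⟩, Set.mem_univ _, ⟨y, rfl⟩⟩

/-- rank -/
noncomputable def rk (𝒞 : LClass A) (k : ℕ) (w : List A) : ℕ :=
  {X ∈ Set.range (up 𝒞 k) | X ⊆ up 𝒞 k w}.ncard

theorem up_sub {𝒞 : LClass A} {k : ℕ} {w v : List A} (h : le 𝒞 k w v) :
    up 𝒞 k v ⊆ up 𝒞 k w := fun _ hx => le.trans h hx

theorem rk_le [Finite A] {𝒞 : LClass A} (hfin : 𝒞.Finite) (hba : LangBoolAlg 𝒞)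
    {k : ℕ} {w v : List A} (h : le 𝒞 k w v) : rk 𝒞 k v ≤ rk 𝒞 k w :=
  Set.ncard_le_ncard (fun _ hX => ⟨hX.1, hX.2.trans (up_sub h)⟩)
    ((up_finite hfin hba k).subset (fun _ hX => hX.1))

theorem rk_lt [Finite A] {𝒞 : LClass A} (hfin : 𝒞.Finite) (hba : LangBoolAlg 𝒞)
    {k : ℕ} {w v : List A} (h : le 𝒞 k w v) (h' : ¬ le 𝒞 k v w) : rk 𝒞 k v < rk 𝒞 k w := by
  refine Set.ncard_lt_ncard ⟨fun _ hX => ⟨hX.1, hX.2.trans (up_sub h)⟩, fun hs => h' ?_⟩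
    ((up_finite hfin hba k).subset (fun _ hX => hX.1))
  exact (hs ⟨⟨w, rfl⟩, subset_rfl⟩).2 le.refl

theorem rk_pos [Finite A] {𝒞 : LClass A} (hfin : 𝒞.Finite) (hba : LangBoolAlg 𝒞)
    (k : ℕ) (w : List A) : 0 < rk 𝒞 k w := by
  rw [rk, Set.ncard_pos ((up_finite hfin hba k).subset (fun _ hX => hX.1))]
  exact ⟨_, ⟨w, rfl⟩, subset_rfl⟩

/-- classes of the equivalence -/
def kc (𝒞 : LClass A) (k : ℕ) (w : List A) : Lang A := {v | le 𝒞 k w v ∧ le 𝒞 k v w}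

theorem kc_eq {𝒞 : LClass A} {k : ℕ} {w v : List A} (h : v ∈ kc 𝒞 k w) :
    kc 𝒞 k v = kc 𝒞 k w := by
  ext x
  exact ⟨fun hx => ⟨h.1.trans hx.1, hx.2.trans h.2⟩, fun hx => ⟨h.2.trans hx.1, hx.2.trans h.1⟩⟩

theorem kc_up {𝒞 : LClass A} {k : ℕ} {w : List A} :
    kc 𝒞 k w = up 𝒞 k w ∩ ⋂₀ {X | ∃ Y ∈ Set.range (up 𝒞 k), w ∉ Y ∧ X = Yᶜ} := by
  ext v
  constructor
  · rintro ⟨h1, h2⟩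
    refine ⟨h1, ?_⟩
    rintro _ ⟨_, ⟨y, rfl⟩, hw, rfl⟩ hv
    exact hw (le.trans hv h2)
  · rintro ⟨h1, h2⟩
    refine ⟨h1, ?_⟩
    by_contra hn
    exact h2 _ ⟨_, ⟨v, rfl⟩, hn, rfl⟩ le.refl

theorem BoolC.base {𝒟 : LClass A} {K : Lang A} (h : K ∈ 𝒟) : K ∈ BoolC 𝒟 := fun _ hE => hE.2 h

theorem BoolC.ba (𝒟 : LClass A) : LangBoolAlg (BoolC 𝒟) :=
  ⟨⟨fun _ hE => hE.1.1.1, fun _ hE => hE.1.1.2.1,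
    fun _ _ h h' E hE => hE.1.1.2.2.1 _ _ (h E hE) (h' E hE),
    fun _ _ h h' E hE => hE.1.1.2.2.2 _ _ (h E hE) (h' E hE)⟩,
    fun _ h E hE => hE.1.2 _ (h E hE)⟩

theorem kc_bool [Finite A] {𝒞 : LClass A} (hfin : 𝒞.Finite) (hba : LangBoolAlg 𝒞)
    (hqc : QuotientClosed 𝒞) (k : ℕ) (w : List A) : kc 𝒞 k w ∈ BoolC (PolC 𝒞) := by
  have hb := BoolC.ba (PolC 𝒞)
  rw [kc_up]
  refine hb.1.2.2.2 _ _ (BoolC.base (up_pol hfin hba hqc k w)) ?_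
  refine fin_sInter hb.1.2.1 hb.1.2.2.2 _ (((up_finite hfin hba k).image compl).subset ?_) ?_
  · rintro _ ⟨Y, hY, _, rfl⟩
    exact ⟨Y, hY, rfl⟩
  · rintro _ ⟨_, ⟨y, rfl⟩, _, rfl⟩
    exact hb.2 _ (BoolC.base (up_pol hfin hba hqc k y))

theorem kc_finite [Finite A] {𝒞 : LClass A} (hfin : 𝒞.Finite) (hba : LangBoolAlg 𝒞)
    (k : ℕ) : (Set.range (kc 𝒞 k)).Finite := by
  refine ((up_finite hfin hba k).image (fun X => X ∩ ⋂₀ {Z | ∃ Y ∈ Set.range (up 𝒞 k),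
    ¬ X ⊆ Y ∧ Z = Yᶜ})).subset ?_
  rintro _ ⟨w, rfl⟩
  refine ⟨_, ⟨w, rfl⟩, ?_⟩
  rw [kc_up]
  have : ∀ Y ∈ Set.range (up 𝒞 k), (¬ up 𝒞 k w ⊆ Y ↔ w ∉ Y) := by
    rintro _ ⟨y, rfl⟩
    exact not_congr ⟨fun h => h le.refl, fun h => up_sub h⟩
  have h2 : {Z | ∃ Y ∈ Set.range (up 𝒞 k), ¬ up 𝒞 k w ⊆ Y ∧ Z = Yᶜ} =
      {Z | ∃ Y ∈ Set.range (up 𝒞 k), w ∉ Y ∧ Z = Yᶜ} := by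
    ext Z
    constructor
    · rintro ⟨Y, hY, h, hZ⟩; exact ⟨Y, hY, (this Y hY).1 h, hZ⟩
    · rintro ⟨Y, hY, h, hZ⟩; exact ⟨Y, hY, (this Y hY).2 h, hZ⟩
  simp only [h2]

theorem pol_up {𝒞 : LClass A} {K : Lang A} (h : K ∈ PolC 𝒞) :
    ∃ k, ∀ w v, le 𝒞 k w v → w ∈ K → v ∈ K := by
  refine PolC.ind (fun K => ∃ k, ∀ w v, le 𝒞 k w v → w ∈ K → v ∈ K) ?_ ?_ ?_ h
  · intro K hK
    exact ⟨0, fun w v hwv hw => (hwv K hK).1 hw⟩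
  · rintro K L ⟨k, hk⟩ ⟨m, hm⟩
    refine ⟨max k m, ?_⟩
    rintro w v hwv (hw | hw)
    · exact Or.inl (hk w v (hwv.anti (le_max_left _ _)) hw)
    · exact Or.inr (hm w v (hwv.anti (le_max_right _ _)) hw)
  · rintro K L a ⟨k, hk⟩ ⟨m, hm⟩
    refine ⟨max k m + 1, ?_⟩
    rintro w v hwv ⟨x, hx, y, hy, rfl⟩
    obtain ⟨x1, y1, h1, h2, h3⟩ := hwv.2 x a y rfl
    exact ⟨x1, hk _ _ (h2.anti (le_max_left _ _)) hx, y1,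
      hm _ _ (h3.anti (le_max_right _ _)) hy, h1⟩

theorem bool_sat {𝒞 : LClass A} {K : Lang A} (h : K ∈ BoolC (PolC 𝒞)) :
    ∃ k, ∀ w v, le 𝒞 k w v → le 𝒞 k v w → (w ∈ K ↔ v ∈ K) := by
  refine h {K | ∃ k, ∀ w v, le 𝒞 k w v → le 𝒞 k v w → (w ∈ K ↔ v ∈ K)}
    ⟨⟨⟨⟨0, fun _ _ _ _ => Iff.rfl⟩, ⟨0, fun _ _ _ _ => Iff.rfl⟩, ?_, ?_⟩, ?_⟩, ?_⟩
  · rintro K L ⟨k, hk⟩ ⟨m, hm⟩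
    refine ⟨max k m, fun w v h1 h2 => ?_⟩
    exact or_congr (hk w v (h1.anti (le_max_left _ _)) (h2.anti (le_max_left _ _)))
      (hm w v (h1.anti (le_max_right _ _)) (h2.anti (le_max_right _ _)))
  · rintro K L ⟨k, hk⟩ ⟨m, hm⟩
    refine ⟨max k m, fun w v h1 h2 => ?_⟩
    exact and_congr (hk w v (h1.anti (le_max_left _ _)) (h2.anti (le_max_left _ _)))
      (hm w v (h1.anti (le_max_right _ _)) (h2.anti (le_max_right _ _)))
  · rintro K ⟨k, hk⟩
    exact ⟨k, fun w v h1 h2 => not_congr (hk w v h1 h2)⟩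
  · intro K hK
    obtain ⟨k, hk⟩ := pol_up hK
    exact ⟨k, fun w v h1 h2 => ⟨hk w v h1, hk v w h2⟩⟩

theorem cover_sat {𝒞 : LClass A} {Ks : LClass A} (hf : Ks.Finite) (hs : Ks ⊆ BoolC (PolC 𝒞)) :
    ∃ k, ∀ K ∈ Ks, ∀ w v, le 𝒞 k w v → le 𝒞 k v w → (w ∈ K ↔ v ∈ K) := by
  induction Ks, hf using Set.Finite.induction_on with
  | empty => exact ⟨0, by simp⟩
  | insert _ _ ih =>
    obtain ⟨k, hk⟩ := ih (fun x hx => hs (Or.inr hx))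
    obtain ⟨m, hm⟩ := bool_sat (hs (Or.inl rfl))
    refine ⟨max k m, ?_⟩
    rintro K (rfl | hK) w v h1 h2
    · exact hm w v (h1.anti (le_max_right _ _)) (h2.anti (le_max_right _ _))
    · exact hk K hK w v (h1.anti (le_max_left _ _)) (h2.anti (le_max_left _ _))

end Basics

section Sound

theorem rle_trans [Semiring R] {a b c : R} (h : rle a b) (h' : rle b c) : rle a c := by
  unfold rle at *
  rw [← h', ← add_assoc, h]

theorem rle_mul [Semiring R] {a b c d : R} (h : rle a b) (h' : rle c d) :
    rle (a * c) (b * d) := by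
  have h1 : rle (a * c) (b * c) := by
    unfold rle at *; rw [← add_mul, h]
  have h2 : rle (b * c) (b * d) := by
    unfold rle at *; rw [← mul_add, h']
  exact rle_trans h1 h2

theorem Hyp.refl [Semiring R] {𝒞 : LClass A} {ρ : Lang A → R} (H : Hyp 𝒞 ρ) (r : R) : rle r r :=
  H.idem r

theorem Hyp.rmono [Semiring R] {𝒞 : LClass A} {ρ : Lang A → R} (H : Hyp 𝒞 ρ) {K L : Lang A}
    (h : K ⊆ L) : rle (ρ K) (ρ L) := by
  unfold rle
  rw [← H.rho.2, Set.union_eq_self_of_subset_left h]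

theorem cat_single (u v : List A) : cat {u} {v} = ({u ++ v} : Lang A) := by
  ext w
  constructor
  · rintro ⟨_, rfl, _, rfl, rfl⟩; rfl
  · rintro rfl; exact ⟨u, rfl, v, rfl, rfl⟩

theorem Hyp.word [Semiring R] {𝒞 : LClass A} {ρ : Lang A → R} (H : Hyp 𝒞 ρ) (u v : List A) :
    ρ {u ++ v} = ρ {u} * ρ {v} := by
  rw [← H.mult.2, cat_single]

theorem list_sum_lang [Semiring R] {𝒞 : LClass A} {ρ : Lang A → R} (H : Hyp 𝒞 ρ)
    (Q : List A → Prop) (l : List R) (h : ∀ r ∈ l, ∃ w, Q w ∧ ρ {w} = r) :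
    ∃ K : Lang A, (∀ w ∈ K, Q w) ∧ ρ K = l.sum := by
  induction l with
  | nil => exact ⟨∅, by simp, by simpa using H.rho.1⟩
  | cons r l ih =>
    obtain ⟨K, hK, hK'⟩ := ih (fun r hr => h r (List.mem_cons_of_mem _ hr))
    obtain ⟨w, hw, hw'⟩ := h r List.mem_cons_self
    refine ⟨{w} ∪ K, ?_, ?_⟩
    · rintro v (rfl | hv)
      · exact hw
      · exact hK v hv
    · rw [H.rho.2, hw', hK', List.sum_cons]

/-- word powers -/
def wpow (e : List A) : ℕ → List A
  | 0 => []
  | n + 1 => e ++ wpow e n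

theorem wpow_add (e : List A) (m n : ℕ) : wpow e (m + n) = wpow e m ++ wpow e n := by
  induction m with
  | zero => simp [wpow]
  | succ m ih => rw [Nat.succ_add]; simp [wpow, ih]

theorem wpow_split {e : List A} {a : A} : ∀ {i : ℕ} {u v : List A}, u ++ a :: v = wpow e i →
    ∃ i1 i2 x y, i = i1 + 1 + i2 ∧ e = x ++ a :: y ∧ u = wpow e i1 ++ x ∧ v = y ++ wpow e i2 := by
  intro i
  induction i with
  | zero => intro u v h; simp [wpow] at h
  | succ i ih =>
    intro u v h
    have key : (∃ y, e = u ++ a :: y ∧ v = y ++ wpow e i) ∨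
        ∃ z, u = e ++ z ∧ z ++ a :: v = wpow e i := by
      rcases List.append_eq_append_iff.1 h with ⟨z, h1, h2⟩ | ⟨z, h1, h2⟩
      · cases z with
        | nil => right; exact ⟨[], by simpa using h1.symm, by simpa using h2⟩
        | cons b z =>
          simp at h2
          obtain ⟨rfl, rfl⟩ := h2
          exact Or.inl ⟨z, h1, rfl⟩
      · exact Or.inr ⟨z, h1, h2.symm⟩
    rcases key with ⟨y, h1, h2⟩ | ⟨z, h1, h2⟩
    · exact ⟨0, i, u, y, by omega, h1, by simp [wpow], h2⟩
    · obtain ⟨i1, i2, x, y, h3, h4, h5, h6⟩ := ih h2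
      exact ⟨i1 + 1, i2, x, y, by omega, h4, by simp [wpow, h1, h5], h6⟩

theorem wpow_ceq {𝒞 : LClass A} (hqc : QuotientClosed 𝒞) {e : List A}
    (he : ceq 𝒞 (e ++ e) e) (i : ℕ) : ceq 𝒞 (wpow e (i + 1)) e := by
  induction i with
  | zero => simp [wpow]; exact ceq.rfl'
  | succ i ih => exact (ceq_app hqc ceq.rfl' ih).trans' he

theorem wpow_le {𝒞 : LClass A} (hqc : QuotientClosed 𝒞) {e : List A}
    (he : ceq 𝒞 (e ++ e) e) (k : ℕ) : ∃ t, 0 < t ∧ ∀ g, ceq 𝒞 g e → ∀ i a b, t ≤ i → t ≤ a → t ≤ b →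
      le 𝒞 k (wpow e i) (wpow e a ++ g ++ wpow e b) := by
  induction k with
  | zero =>
    refine ⟨1, one_pos, fun g hg i a b hi ha hb => ?_⟩
    obtain ⟨i, rfl⟩ := Nat.exists_eq_add_of_le' hi
    obtain ⟨a, rfl⟩ := Nat.exists_eq_add_of_le' ha
    obtain ⟨b, rfl⟩ := Nat.exists_eq_add_of_le' hb
    have h1 := wpow_ceq hqc he
    have := ceq_app hqc (ceq_app hqc (h1 a) hg) (h1 b)
    exact (h1 i).trans' (this.trans' ((ceq_app hqc he ceq.rfl').trans' he)).symm'
  | succ k ih =>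
    obtain ⟨t, ht, ih⟩ := ih
    have ihp : ∀ i b, t ≤ i → 2 * t + 1 ≤ b → le 𝒞 k (wpow e i) (wpow e b) := by
      intro i b hi hb
      have := ih e ceq.rfl' i t (b - t - 1) hi le_rfl (by omega)
      have h2 : wpow e b = wpow e t ++ e ++ wpow e (b - t - 1) := by
        have : b = t + (1 + (b - t - 1)) := by omega
        conv_lhs => rw [this, wpow_add, wpow_add]
        simp [wpow]
      rw [h2]; exact this
    refine ⟨4 * t + 4, by omega, fun g hg i a b hi ha hb =>
      ⟨ih g hg i a b (by omega) (by omega) (by omega), fun u c v huv => ?_⟩⟩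
    obtain ⟨i1, i2, x, y, h1, h2, rfl, rfl⟩ := wpow_split huv
    have hsplit : ∀ n1 n2, x ++ c :: (y ++ wpow e n2) = wpow e (1 + n2) ∧
        wpow e n1 ++ (x ++ c :: (y ++ wpow e n2)) = wpow e (n1 + 1 + n2) := by
      intro n1 n2
      have h3 : x ++ c :: (y ++ wpow e n2) = wpow e (1 + n2) := by
        rw [Nat.add_comm]
        show _ = e ++ wpow e n2
        have h5 : e ++ wpow e n2 = (x ++ c :: y) ++ wpow e n2 := by rw [← h2]
        rw [h5]; simp
      refine ⟨h3, ?_⟩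
      rw [h3, ← wpow_add]; congr 1
      omega
    have main : ∀ b1 b2, b1 + 1 + b2 = b → le 𝒞 k (wpow e i1) (wpow e a ++ g ++ wpow e b1) →
        le 𝒞 k (wpow e i2) (wpow e b2) → ∃ u' v', u' ++ c :: v' = wpow e a ++ g ++ wpow e b ∧
        le 𝒞 k (wpow e i1 ++ x) u' ∧ le 𝒞 k (y ++ wpow e i2) v' := by
      intro b1 b2 hb12 h3 h4
      refine ⟨wpow e a ++ g ++ wpow e b1 ++ x, y ++ wpow e b2, ?_,
        le.app hqc h3 le.refl, le.app hqc le.refl h4⟩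
      rw [← hb12, ← (hsplit b1 b2).2]
      simp
    by_cases hi2 : i2 < t
    · exact main (b - 1 - i2) i2 (by omega) (ih g hg _ _ _ (by omega) (by omega) (by omega)) le.refl
    by_cases hi1 : i1 < t
    · refine ⟨wpow e i1 ++ x, y ++ (wpow e (a - 1 - i1) ++ g ++ wpow e b), ?_, le.refl,
        le.app hqc le.refl (ih g hg _ _ _ (by omega) (by omega) (by omega))⟩
      have := (hsplit i1 (a - 1 - i1)).2
      rw [show i1 + 1 + (a - 1 - i1) = a by omega] at this
      rw [← this]
      simp
    · exact main (b - 1 - (2 * t + 1)) (2 * t + 1) (by omega)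
        (ih g hg _ _ _ (by omega) (by omega) (by omega)) (ihp _ _ (by omega) le_rfl)

/-- alternation trees -/
def Tr [Semiring R] (𝒞 : LClass A) (ρ : Lang A → R) (k : ℕ) : ℕ → List A → R → Prop
  | 0, _, _ => True
  | m + 1, w, r => ∃ K : Lang A, rle r (ρ K) ∧ ∀ v ∈ K, le 𝒞 k w v ∧ Tr 𝒞 ρ k m v r

variable [Semiring R] {𝒞 : LClass A} {ρ : Lang A → R} {k : ℕ}

theorem Tr.down {m : ℕ} : ∀ {w : List A} {r s : R}, Tr 𝒞 ρ k m w r → rle s r →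
    Tr 𝒞 ρ k m w s := by
  induction m with
  | zero => intros; trivial
  | succ m ih =>
    rintro w r s ⟨K, h1, h2⟩ hs
    exact ⟨K, rle_trans hs h1, fun v hv => ⟨(h2 v hv).1, ih (h2 v hv).2 hs⟩⟩

theorem Tr.triv (H : Hyp 𝒞 ρ) {m : ℕ} {w : List A} : Tr 𝒞 ρ k m w (ρ {w}) := by
  induction m with
  | zero => trivial
  | succ m ih => exact ⟨{w}, H.refl _, by rintro v rfl; exact ⟨le.refl, ih⟩⟩

theorem Tr.mul (H : Hyp 𝒞 ρ) {m : ℕ} : ∀ {w v : List A} {r s : R}, Tr 𝒞 ρ k m w r →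
    Tr 𝒞 ρ k m v s → Tr 𝒞 ρ k m (w ++ v) (r * s) := by
  induction m with
  | zero => intros; trivial
  | succ m ih =>
    rintro w v r s ⟨K, h1, h2⟩ ⟨L, h3, h4⟩
    refine ⟨cat K L, by rw [H.mult.2]; exact rle_mul h1 h3, ?_⟩
    rintro _ ⟨x, hx, y, hy, rfl⟩
    exact ⟨le.app H.qc (h2 x hx).1 (h4 y hy).1, ih (h2 x hx).2 (h4 y hy).2⟩

theorem Tr.pow (H : Hyp 𝒞 ρ) {m : ℕ} {e : List A} {F : Set R} (hF : smul F F = F)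
    (h : ∀ u ∈ F, Tr 𝒞 ρ k m e u) (i : ℕ) : ∀ u ∈ F, Tr 𝒞 ρ k m (wpow e (i + 1)) u := by
  induction i with
  | zero => simpa [wpow] using h
  | succ i ih =>
    intro u hu
    rw [← hF] at hu
    obtain ⟨x, hx, y, hy, rfl⟩ := hu
    exact Tr.mul H (h x hx) (ih y hy)

theorem rbpol_tree (H : Hyp 𝒞 ρ) {S : Set (Lang A × R)} (m : ℕ)
    (hm : ∀ j, m = j + 1 → ∀ p ∈ S, ∃ K : Lang A, K ⊆ p.1 ∧ rle p.2 (ρ K) ∧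
      ∀ w ∈ K, Tr 𝒞 ρ k j w p.2) {D : Lang A} {q : R} {U : Set R} (h : Rbpol 𝒞 ρ S D q U) :
    ∃ w, D = cclass 𝒞 w ∧ ρ {w} = q ∧ ∀ u ∈ U, Tr 𝒞 ρ k m w u := by
  induction h with
  | triv w => exact ⟨w, rfl, rfl, by rintro u rfl; exact Tr.triv H⟩
  | down _ hV ih =>
    obtain ⟨w, h1, h2, h3⟩ := ih
    refine ⟨w, h1, h2, fun u hu => ?_⟩
    obtain ⟨s, hs, hs'⟩ := hV hu
    exact (h3 s hs).down hs'
  | mul _ _ ih1 ih2 =>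
    obtain ⟨w, rfl, rfl, h3⟩ := ih1
    obtain ⟨v, rfl, rfl, h6⟩ := ih2
    refine ⟨w ++ v, cmul_cclass H.qc w v, H.word w v, ?_⟩
    rintro _ ⟨x, hx, y, hy, rfl⟩
    exact Tr.mul H (h3 x hx) (h6 y hy)
  | @clos E f F _ hE hf hF ih =>
    obtain ⟨e, rfl, rfl, h3⟩ := ih
    rw [cmul_cclass H.qc] at hE
    have he := ceq_of_cclass hE
    obtain ⟨t, ht, hle⟩ := wpow_le H.qc he k
    obtain ⟨t, rfl⟩ := Nat.exists_eq_add_of_le' ht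
    have hpow : ∀ i, ρ {wpow e (i + 1)} = ρ {e} := by
      intro i
      induction i with
      | zero => simp [wpow]
      | succ i ih => rw [show wpow e (i + 1 + 1) = e ++ wpow e (i + 1) from rfl, H.word, ih, hf]
    refine ⟨wpow e (t + 1), cclass_eq (wpow_ceq H.qc he t).symm', hpow t, ?_⟩
    rintro _ ⟨x, hx, _, ⟨s, hs, y, hy, rfl⟩, rfl⟩
    cases m with
    | zero => trivial
    | succ m =>
      obtain ⟨G, hG1, hG2, hG3⟩ := hm m rfl _ hs
      obtain ⟨K, hK1, hK2⟩ := Tr.pow H hF h3 t x hx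
      obtain ⟨L, hL1, hL2⟩ := Tr.pow H hF h3 t y hy
      refine ⟨cat K (cat G L), ?_, ?_⟩
      · rw [H.mult.2, H.mult.2]
        exact rle_mul hK1 (rle_mul hG2 hL1)
      · rintro _ ⟨a, ha, _, ⟨g, hg, b, hb, rfl⟩, rfl⟩
        refine ⟨?_, Tr.mul H (hK2 a ha).2 (Tr.mul H (hG3 g hg) (hL2 b hb).2)⟩
        have h1 := hle g (hG1 hg).symm' (t + 1) (t + 1) (t + 1) le_rfl le_rfl le_rfl
        have h2 := le.app H.qc (hK2 a ha).1 (le.app H.qc (le.refl (w := g)) (hL2 b hb).1)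
        rw [List.append_assoc] at h1
        exact h1.trans h2

theorem sat_tree (H : Hyp 𝒞 ρ) {S : Set (Lang A × R)} (hS : BPolSaturated 𝒞 ρ S) (m : ℕ) :
    ∀ p ∈ S, ∃ K : Lang A, K ⊆ p.1 ∧ rle p.2 (ρ K) ∧ ∀ w ∈ K, Tr 𝒞 ρ k m w p.2 := by
  induction m with
  | zero =>
    intro p hp
    obtain ⟨l, _, h1, h2⟩ := hS.2 p hp
    obtain ⟨K, hK, hK'⟩ := list_sum_lang H (fun w => w ∈ p.1) l (fun r hr => by
      obtain ⟨w, hw, hw', _⟩ := rbpol_tree (k := k) H 0 (by simp) (h2 r hr)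
      exact ⟨w, by rw [hw]; exact ceq.rfl', hw'⟩)
    exact ⟨K, hK, by rw [hK']; exact h1, fun _ _ => trivial⟩
  | succ m ih =>
    intro p hp
    obtain ⟨l, _, h1, h2⟩ := hS.2 p hp
    obtain ⟨K, hK, hK'⟩ := list_sum_lang H (fun w => w ∈ p.1 ∧ Tr 𝒞 ρ k (m + 1) w p.2) l
      (fun r hr => by
        obtain ⟨w, hw, hw', hw''⟩ := rbpol_tree (k := k) H (m + 1)
          (fun j hj => by obtain rfl : m = j := by omega
                          exact ih) (h2 r hr)
        exact ⟨w, ⟨by rw [hw]; exact ceq.rfl', (hw'' _ rfl).down h1⟩, hw'⟩)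
    exact ⟨K, fun w hw => (hK w hw).1, by rw [hK']; exact h1, fun w hw => (hK w hw).2⟩

theorem tree_stable [Finite A] (H : Hyp 𝒞 ρ) (m : ℕ) : ∀ (w : List A) (r : R), rk 𝒞 k w ≤ m →
    Tr 𝒞 ρ k m w r → ∃ v, le 𝒞 k w v ∧ rle r (ρ (kc 𝒞 k v)) := by
  induction m with
  | zero => intro w r h; have := rk_pos H.fin H.ba k w; omega
  | succ m ih =>
    rintro w r h ⟨K, h1, h2⟩
    by_cases hK : ∀ v ∈ K, le 𝒞 k v w
    · exact ⟨w, le.refl, rle_trans h1 (H.rmono (fun v hv => ⟨(h2 v hv).1, hK v hv⟩))⟩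
    · push Not at hK
      obtain ⟨v, hv, hv'⟩ := hK
      have := rk_lt H.fin H.ba (h2 v hv).1 hv'
      obtain ⟨x, hx, hx'⟩ := ih v r (by omega) (h2 v hv).2
      exact ⟨x, (h2 v hv).1.trans hx, hx'⟩

theorem soundness [Finite A] (H : Hyp 𝒞 ρ) {S : Set (Lang A × R)} (hS : BPolSaturated 𝒞 ρ S) :
    S ⊆ {p : Lang A × R | IsCClass 𝒞 p.1 ∧
        p.2 ∈ optImprint (BoolC (PolC 𝒞)) ρ p.1} := by
  rintro ⟨D, r⟩ hp
  refine ⟨hS.1 _ hp, ?_⟩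
  rintro Ks ⟨⟨hf, hc⟩, hK⟩
  obtain ⟨k, hk⟩ := cover_sat hf hK
  have hmx : ∃ m, ∀ w, rk 𝒞 k w ≤ m :=
    ⟨_, fun w => Set.ncard_le_ncard (fun _ hX => hX.1) (up_finite H.fin H.ba k)⟩
  obtain ⟨m, hm⟩ := hmx
  obtain ⟨l, hl, h1, h2⟩ := hS.2 _ hp
  obtain ⟨r1, hr1⟩ := List.exists_mem_of_ne_nil l hl
  obtain ⟨w, hw, _, hw''⟩ := rbpol_tree (k := k) H m (fun j _ => sat_tree H hS j) (h2 r1 hr1)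
  obtain ⟨v, hv, hv'⟩ := tree_stable H m w _ (hm w) (hw'' _ rfl)
  simp only at hw
  have hvD : v ∈ D := by rw [hw]; exact hv.ceq
  obtain ⟨K, hK1, hK2⟩ := hc hvD
  refine ⟨K, hK1, rle_trans h1 (rle_trans hv' (H.rmono ?_))⟩
  intro x hx
  exact (hk K hK1 v x hx.1 hx.2).1 hK2

end Sound

section Complete

open scoped Pointwise

variable [Semiring R] {𝒞 : LClass A} {ρ : Lang A → R}

def PS (𝒞 : LClass A) (ρ : Lang A → R) : Set (Lang A × R) :=
  {p | IsCClass 𝒞 p.1 ∧ p.2 ∈ optImprint (BoolC (PolC 𝒞)) ρ p.1}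

def PD (𝒞 : LClass A) (ρ : Lang A → R) (D : Lang A) : Set R := {r | (D, r) ∈ PS 𝒞 ρ}

theorem smul_eq (U V : Set R) : smul U V = U * V := by
  ext x; exact Iff.rfl

theorem one_PD (H : Hyp 𝒞 ρ) : (1 : R) ∈ PD 𝒞 ρ (cclass 𝒞 []) := by
  refine ⟨⟨[], rfl⟩, fun Ks hK => ?_⟩
  obtain ⟨K, hK1, hK2⟩ := hK.1.2 (ceq.rfl' : [] ∈ cclass 𝒞 [])
  refine ⟨K, hK1, ?_⟩
  show rle 1 _
  rw [← H.mult.1]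
  exact H.rmono (by rintro _ rfl; exact hK2)

theorem exists_k0 [Finite R] (H : Hyp 𝒞 ρ) :
    ∃ k0, ∀ u r, rle r (ρ (kc 𝒞 k0 u)) → r ∈ PD 𝒞 ρ (cclass 𝒞 u) := by
  have h1 : ∀ p : Lang A × R, ∃ k, p.2 ∉ optImprint (BoolC (PolC 𝒞)) ρ p.1 →
      ∃ Ks, IsCCover (BoolC (PolC 𝒞)) Ks p.1 ∧ p.2 ∉ imprint ρ Ks ∧
        ∀ K ∈ Ks, ∀ w v, le 𝒞 k w v → le 𝒞 k v w → (w ∈ K ↔ v ∈ K) := by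
    intro p
    by_cases hp : p.2 ∈ optImprint (BoolC (PolC 𝒞)) ρ p.1
    · exact ⟨0, fun h => absurd hp h⟩
    · have hp' := hp
      simp only [optImprint, Set.mem_setOf_eq, not_forall] at hp'
      obtain ⟨Ks, hK, hK'⟩ := hp'
      obtain ⟨k, hk⟩ := cover_sat hK.1.1 hK.2
      exact ⟨k, fun _ => ⟨Ks, hK, hK', hk⟩⟩
  choose f hf using h1
  obtain ⟨k0, hk0⟩ := ((H.fin.prod (Set.toFinite (Set.univ : Set R))).image f).bddAbove
  refine ⟨k0, fun u r hr => ⟨⟨u, rfl⟩, ?_⟩⟩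
  by_contra hn
  obtain ⟨Ks, hK1, hK2, hK3⟩ := hf (cclass 𝒞 u, r) hn
  have hle : f (cclass 𝒞 u, r) ≤ k0 :=
    hk0 ⟨_, ⟨cclass_mem H.fin H.ba u, Set.mem_univ _⟩, rfl⟩
  obtain ⟨K, hK, hu⟩ := hK1.1.2 (ceq.rfl' : u ∈ cclass 𝒞 u)
  refine hK2 ⟨K, hK, rle_trans hr (H.rmono ?_)⟩
  intro v hv
  exact (hK3 K hK u v (hv.1.anti hle) (hv.2.anti hle)).1 hu

theorem kc_split [Finite A] (H : Hyp 𝒞 ρ) (k : ℕ) (w : List A) (a : A) (n : ℕ) :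
    ∀ u0 v0, rk 𝒞 k u0 + rk 𝒞 k v0 ≤ n → u0 ++ a :: v0 = w →
    ∃ u v, u ++ a :: v = w ∧ le 𝒞 k u0 u ∧ le 𝒞 k v0 v ∧
      kc 𝒞 (k + 1) w ⊆ mcat (kc 𝒞 k u) a (kc 𝒞 k v) := by
  induction n with
  | zero =>
    intro u0 v0 h
    have := rk_pos H.fin H.ba k u0
    omega
  | succ n ih =>
    intro u0 v0 hn hw
    by_cases hc : ∃ u v, u ++ a :: v = w ∧ le 𝒞 k u0 u ∧ le 𝒞 k v0 v ∧
        (¬ le 𝒞 k u u0 ∨ ¬ le 𝒞 k v v0)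
    · obtain ⟨u, v, h1, h2, h3, h4⟩ := hc
      have hlt : rk 𝒞 k u + rk 𝒞 k v ≤ n := by
        have e1 := rk_le H.fin H.ba h2
        have e2 := rk_le H.fin H.ba h3
        rcases h4 with h4 | h4
        · have := rk_lt H.fin H.ba h2 h4; omega
        · have := rk_lt H.fin H.ba h3 h4; omega
      obtain ⟨u', v', g1, g2, g3, g4⟩ := ih u v hlt h1
      exact ⟨u', v', g1, h2.trans g2, h3.trans g3, g4⟩
    · refine ⟨u0, v0, hw, le.refl, le.refl, ?_⟩
      intro w' hw'
      obtain ⟨u', v', g1, g2, g3⟩ := hw'.1.2 u0 a v0 hw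
      obtain ⟨u2, v2, f1, f2, f3⟩ := hw'.2.2 u' a v' g1
      have : le 𝒞 k u2 u0 ∧ le 𝒞 k v2 v0 := by
        by_contra hcon
        exact hc ⟨u2, v2, f1, g2.trans f2, g3.trans f3, by tauto⟩
      exact ⟨u', ⟨g2, f2.trans this.1⟩, v', ⟨g3, f3.trans this.2⟩, g1⟩

theorem mcat_cat (K L : Lang A) (a : A) : mcat K a L = cat K (cat {[a]} L) := by
  ext w
  constructor
  · rintro ⟨u, hu, v, hv, rfl⟩
    exact ⟨u, hu, _, ⟨[a], rfl, v, hv, rfl⟩, rfl⟩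
  · rintro ⟨u, hu, _, ⟨_, rfl, v, hv, rfl⟩, rfl⟩
    exact ⟨u, hu, v, hv, rfl⟩

/-- value of a pattern -/
def Vp (𝒞 : LClass A) (ρ : Lang A → R) : List (Lang A × A) → Set R → Set R
  | [], W => W
  | (D, a) :: l, W => PD 𝒞 ρ D * ({ρ {[a]}} * Vp 𝒞 ρ l W)

theorem Vp_append (l l' : List (Lang A × A)) (W : Set R) :
    Vp 𝒞 ρ (l ++ l') W = Vp 𝒞 ρ l (Vp 𝒞 ρ l' W) := by
  induction l with
  | nil => rfl
  | cons p l ih => simp [Vp, ih]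

theorem Vp_mul (l : List (Lang A × A)) (W W' : Set R) :
    Vp 𝒞 ρ l (W * W') = Vp 𝒞 ρ l W * W' := by
  induction l with
  | nil => rfl
  | cons p l ih =>
    obtain ⟨D, a⟩ := p
    simp only [Vp]
    rw [ih, mul_assoc, mul_assoc]

theorem Vp_one (l : List (Lang A × A)) (W : Set R) :
    Vp 𝒞 ρ l W = Vp 𝒞 ρ l 1 * W := by
  rw [← Vp_mul, one_mul]

theorem plang_up (l : List (Lang A × A)) (hl : ∀ p ∈ l, IsCClass 𝒞 p.1) (E : Lang A)
    (hE : IsCClass 𝒞 E) : ∀ (k : ℕ) (w v : List A), l.length ≤ k → le 𝒞 k w v →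
    w ∈ plang l E → v ∈ plang l E := by
  induction l with
  | nil =>
    intro k w v _ h hw
    obtain ⟨x, rfl⟩ := hE
    exact ceq.trans' hw h.ceq
  | cons p l ih =>
    obtain ⟨D, a⟩ := p
    rintro k w v hk h ⟨x, hx, y, hy, rfl⟩
    cases k with
    | zero => simp at hk
    | succ k =>
      obtain ⟨x', y', h1, h2, h3⟩ := h.2 x a y rfl
      obtain ⟨z, hz⟩ := hl (D, a) List.mem_cons_self
      simp only at hz
      subst hz
      exact ⟨x', ceq.trans' hx h2.ceq, y', ih (fun p hp => hl p (List.mem_cons_of_mem _ hp)) k y y'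
        (by simpa using hk) h3 hy, h1⟩

theorem kc_anti {k m : ℕ} (h : k ≤ m) (w : List A) : kc 𝒞 m w ⊆ kc 𝒞 k w :=
  fun _ hv => ⟨hv.1.anti h, hv.2.anti h⟩

theorem vp_bound [Finite A] (H : Hyp 𝒞 ρ) {k0 : ℕ}
    (hk : ∀ u r, rle r (ρ (kc 𝒞 k0 u)) → r ∈ PD 𝒞 ρ (cclass 𝒞 u)) (E : Lang A)
    (hE : IsCClass 𝒞 E) (l : List (Lang A × A)) (hl : ∀ p ∈ l, IsCClass 𝒞 p.1) :
    ∀ w ∈ plang l E, ρ (kc 𝒞 (k0 + l.length) w) ∈ dclos (Vp 𝒞 ρ l (PD 𝒞 ρ E)) := by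
  induction l with
  | nil =>
    intro w hw
    obtain ⟨x, rfl⟩ := hE
    refine ⟨_, ?_, H.refl _⟩
    have : cclass 𝒞 x = cclass 𝒞 w := cclass_eq hw
    rw [this]
    exact hk w _ (H.refl _)
  | cons p l ih =>
    obtain ⟨D, a⟩ := p
    rintro w ⟨u0, hu0, v0, hv0, hw⟩
    have hl' : ∀ p ∈ l, IsCClass 𝒞 p.1 := fun p hp => hl p (List.mem_cons_of_mem _ hp)
    obtain ⟨u, v, h1, h2, h3, h4⟩ := kc_split H (k0 + l.length) w a _ u0 v0 le_rfl hw
    have hv := plang_up l hl' E hE _ _ _ (by omega) h3 hv0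
    obtain ⟨s, hs, hs'⟩ := ih hl' v hv
    obtain ⟨z, hz⟩ := hl (D, a) List.mem_cons_self
    simp only at hz
    subst hz
    have hD : cclass 𝒞 z = cclass 𝒞 u := cclass_eq (ceq.trans' hu0 h2.ceq)
    refine ⟨ρ (kc 𝒞 (k0 + l.length) u) * (ρ {[a]} * s), ?_, ?_⟩
    · refine Set.mul_mem_mul ?_ (Set.mul_mem_mul rfl hs)
      rw [hD]
      exact hk u _ (H.rmono (kc_anti (by omega) u))
    · have := H.rmono h4
      rw [mcat_cat, H.mult.2, H.mult.2] at this
      exact rle_trans this (rle_mul (H.refl _) (rle_mul (H.refl _) hs'))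

def GU (𝒞 : LClass A) (ρ : Lang A → R) (h : ℕ) (w : List A) (U : Set R) : Prop :=
  ∃ a l, l.length + 1 ≤ h ∧ (∀ p ∈ l, IsCClass 𝒞 p.1) ∧
    w ∈ plang ((cclass 𝒞 [], a) :: l) {[]} ∧ Vp 𝒞 ρ ((cclass 𝒞 [], a) :: l) 1 ⊆ U ∧
    Rbpol 𝒞 ρ (PS 𝒞 ρ) (cclass 𝒞 w) (ρ {w}) U

def GG (𝒞 : LClass A) (ρ : Lang A → R) (h : ℕ) (w : List A) : Prop :=
  w = [] ∨ ∃ U, GU 𝒞 ρ h w U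

theorem GU.mono {h h' : ℕ} (hh : h ≤ h') {w : List A} {U : Set R} (H : GU 𝒞 ρ h w U) :
    GU 𝒞 ρ h' w U := by
  obtain ⟨a, l, h1, h2⟩ := H
  exact ⟨a, l, h1.trans hh, h2⟩

theorem GG.mono {h h' : ℕ} (hh : h ≤ h') {w : List A} (H : GG 𝒞 ρ h w) :
    GG 𝒞 ρ h' w := by
  rcases H with rfl | ⟨U, hU⟩
  · exact Or.inl rfl
  · exact Or.inr ⟨U, hU.mono hh⟩

theorem rb_eps (H : Hyp 𝒞 ρ) :
    Rbpol 𝒞 ρ (PS 𝒞 ρ) (cclass 𝒞 []) 1 (PD 𝒞 ρ (cclass 𝒞 [])) := by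
  have h1 := Rbpol.triv (𝒞 := 𝒞) (ρ := ρ) (S := PS 𝒞 ρ) []
  rw [H.mult.1] at h1
  have h2 := h1.clos (cmul_cclass H.qc [] []) (one_mul 1)
    (by rw [smul_eq]; exact one_mul (1 : Set R))
  rw [smul_eq, smul_eq] at h2
  have h3 : ({1} : Set R) = 1 := rfl
  rw [h3, one_mul, mul_one] at h2
  exact h2

theorem rb_mul (H : Hyp 𝒞 ρ) {S : Set (Lang A × R)} {u v : List A} {U V : Set R}
    (h1 : Rbpol 𝒞 ρ S (cclass 𝒞 u) (ρ {u}) U)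
    (h2 : Rbpol 𝒞 ρ S (cclass 𝒞 v) (ρ {v}) V) :
    Rbpol 𝒞 ρ S (cclass 𝒞 (u ++ v)) (ρ {u ++ v}) (U * V) := by
  have := h1.mul h2
  rwa [cmul_cclass H.qc, ← H.word, smul_eq] at this

theorem GU.letter (H : Hyp 𝒞 ρ) (a : A) :
    GU 𝒞 ρ 1 [a] (PD 𝒞 ρ (cclass 𝒞 []) * {ρ {[a]}}) := by
  refine ⟨a, [], le_rfl, by simp, ⟨[], ceq.rfl', [], rfl, rfl⟩, ?_, ?_⟩
  · show PD 𝒞 ρ (cclass 𝒞 []) * ({ρ {[a]}} * 1) ⊆ _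
    rw [mul_one]
  · have h1 := rb_eps H
    rw [← H.mult.1] at h1
    exact rb_mul H h1 (Rbpol.triv [a])

theorem plang_cat (l : List (Lang A × A)) (E : Lang A) {u v : List A} (hu : u ∈ plang l {[]})
    (hv : v ∈ E) : u ++ v ∈ plang l E := by
  induction l generalizing u with
  | nil => rw [show u = [] from hu]; exact hv
  | cons p l ih =>
    obtain ⟨D, a⟩ := p
    obtain ⟨x, hx, y, hy, rfl⟩ := hu
    exact ⟨x, hx, y ++ v, ih hy, by simp⟩

theorem GU.mul (H : Hyp 𝒞 ρ) {h h' : ℕ} {u v : List A} {U V : Set R} (h1 : GU 𝒞 ρ h u U)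
    (h2 : GU 𝒞 ρ h' v V) : GU 𝒞 ρ (h + h') (u ++ v) (U * V) := by
  obtain ⟨a, l, l1, l2, l3, l4, l5⟩ := h1
  obtain ⟨b, m, m1, m2, m3, m4, m5⟩ := h2
  refine ⟨a, l ++ (cclass 𝒞 [], b) :: m, by simp; omega, ?_, ?_, ?_, rb_mul H l5 m5⟩
  · intro p hp
    rcases List.mem_append.1 hp with hp | hp
    · exact l2 p hp
    · rcases List.mem_cons.1 hp with rfl | hp
      · exact ⟨[], rfl⟩
      · exact m2 p hp
  · rw [← List.cons_append, plang_append]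
    exact plang_cat _ _ l3 m3
  · rw [← List.cons_append, Vp_append, Vp_one]
    exact Set.mul_subset_mul l4 m4

theorem GU.clos (H : Hyp 𝒞 ρ) {h : ℕ} {y x z : List A} {F : Set R}
    (hx : ceq 𝒞 x y) (hz : ceq 𝒞 z y) (hyy : ceq 𝒞 (y ++ y) y)
    (rx : ρ {x} = ρ {y}) (rz : ρ {z} = ρ {y}) (ry : ρ {y} * ρ {y} = ρ {y})
    (hF : F * F = F) (h1 : GU 𝒞 ρ h y F) (h2 : GU 𝒞 ρ h z F) :
    ∃ U, GU 𝒞 ρ (h + h) (y ++ (x ++ z)) U := by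
  obtain ⟨a, l, l1, l2, l3, l4, l5⟩ := h1
  obtain ⟨b, m, m1, m2, m3, m4, m5⟩ := h2
  refine ⟨F * (PD 𝒞 ρ (cclass 𝒞 y) * F), a, l ++ (cclass 𝒞 x, b) :: m, by simp; omega,
    ?_, ?_, ?_, ?_⟩
  · intro p hp
    rcases List.mem_append.1 hp with hp | hp
    · exact l2 p hp
    · rcases List.mem_cons.1 hp with rfl | hp
      · exact ⟨x, rfl⟩
      · exact m2 p hp
  · rw [← List.cons_append, plang_append]
    refine plang_cat _ _ l3 ?_
    obtain ⟨s, hs, t, ht, rfl⟩ := m3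
    refine ⟨x ++ s, ?_, t, ht, by simp⟩
    have := ceq_app H.qc (ceq.rfl' (w := x)) hs
    rw [List.append_nil] at this
    exact this
  · rw [← List.cons_append, Vp_append, Vp_one]
    refine Set.mul_subset_mul l4 ?_
    rw [← cclass_eq hx]
    refine Set.mul_subset_mul subset_rfl (subset_trans ?_ m4)
    intro r hr
    have := Set.mul_mem_mul (one_PD H) hr
    rwa [one_mul] at this
  · have h3 := l5.clos (by rw [cmul_cclass H.qc, cclass_eq hyy]) ry (by rw [smul_eq, hF])
    rw [smul_eq, smul_eq] at h3
    have e1 : cclass 𝒞 (y ++ (x ++ z)) = cclass 𝒞 y :=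
      cclass_eq ((ceq_app H.qc ceq.rfl' ((ceq_app H.qc hx hz).trans' hyy)).trans' hyy)
    have e2 : ρ {y ++ (x ++ z)} = ρ {y} := by rw [H.word, H.word, rx, rz, ry, ry]
    rw [e1, e2]
    exact h3

theorem GG.mul (H : Hyp 𝒞 ρ) {h h' : ℕ} {u v : List A} (h1 : GG 𝒞 ρ h u)
    (h2 : GG 𝒞 ρ h' v) : GG 𝒞 ρ (h + h') (u ++ v) := by
  rcases h1 with rfl | ⟨U, hU⟩
  · exact GG.mono (by omega) h2
  · rcases h2 with rfl | ⟨V, hV⟩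
    · rw [List.append_nil]; exact Or.inr ⟨U, hU.mono (by omega)⟩
    · exact Or.inr ⟨_, GU.mul H hU hV⟩

/-! iteration over an idempotent -/

section Iter

variable {N : Type} [Monoid N] {α : List A → N} {e : N} {h : ℕ}

abbrev wd (M : List (List A × Set R)) : List A := (M.map Prod.fst).flatten
abbrev pr (M : List (List A × Set R)) : Set R := (M.map Prod.snd).prod

def good (𝒞 : LClass A) (ρ : Lang A → R) (α : List A → N) (e : N) (h : ℕ)
    (M : List (List A × Set R)) : Prop := ∀ p ∈ M, GU 𝒞 ρ h p.1 p.2 ∧ α p.1 = e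

theorem good.gu (H : Hyp 𝒞 ρ) {M : List (List A × Set R)} (hM : good 𝒞 ρ α e h M) (hn : M ≠ []) :
    GU 𝒞 ρ (h * M.length) (wd M) (pr M) := by
  induction M with
  | nil => exact absurd rfl hn
  | cons p M ih =>
    have hp := (hM p List.mem_cons_self).1
    by_cases hM' : M = []
    · subst hM'; simpa [wd, pr] using hp
    · have := GU.mul H hp (ih (fun q hq => hM q (List.mem_cons_of_mem _ hq)) hM')
      have h2 : h * (p :: M).length = h + h * M.length := by simp; ring
      rw [h2]
      simpa [wd, pr] using this

theorem good.al (hone : α [] = 1) (hhom : ∀ u v, α (u ++ v) = α u * α v) (he : e * e = e)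
    {M : List (List A × Set R)} (hM : good 𝒞 ρ α e h M) (hn : M ≠ []) : α (wd M) = e := by
  induction M with
  | nil => exact absurd rfl hn
  | cons p M ih =>
    have hp := (hM p List.mem_cons_self).2
    by_cases hM' : M = []
    · subst hM'; simpa [wd] using hp
    · have := ih (fun q hq => hM q (List.mem_cons_of_mem _ hq)) hM'
      show α (p.1 ++ wd M) = e
      rw [hhom, hp, this, he]

def Fac (c : ℕ) (M X Y Z : List (List A × Set R)) : Prop :=
  M = X ++ (Y ++ Z) ∧ Y ≠ [] ∧ Y.length ≤ c ∧ pr Y * pr Y = pr Y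

theorem wd_app (M M' : List (List A × Set R)) : wd (M ++ M') = wd M ++ wd M' := by simp [wd]

theorem iter_aux (H : Hyp 𝒞 ρ) (hone : α [] = 1) (hhom : ∀ u v, α (u ++ v) = α u * α v)
    (hα : ∀ u v, α u = α v → ceq 𝒞 u v ∧ ρ {u} = ρ {v}) (he : e * e = e) (c : ℕ)
    (hc : ∀ l : List (Set R), c ≤ l.length →
      ∃ X Y Z, l = X ++ Y ++ Z ∧ Y ≠ [] ∧ Y.length ≤ c ∧ Y.prod * Y.prod = Y.prod)
    (𝓕 : Set (Set R)) (hf : 𝓕.Finite) :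
    ∃ n, ∀ M, good 𝒞 ρ α e h M → (∀ X Y Z, Fac c M X Y Z → pr Y ∈ 𝓕) → GG 𝒞 ρ n (wd M) := by
  induction 𝓕, hf using Set.Finite.induction_on with
  | empty =>
    refine ⟨h * c, fun M hM hF => ?_⟩
    by_cases hl : c ≤ M.length
    · exfalso
      obtain ⟨X, Y, Z, h1, h2, h3, h4⟩ := hc (M.map Prod.snd) (by simpa using hl)
      rw [List.append_assoc] at h1
      obtain ⟨X', W', rfl, rfl, hW⟩ := List.map_eq_append_iff.1 h1
      obtain ⟨Y', Z', rfl, rfl, rfl⟩ := List.map_eq_append_iff.1 hW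
      exact hF X' Y' Z' ⟨rfl, by simpa using h2, by simpa using h3, h4⟩
    · by_cases hn : M = []
      · subst hn; exact Or.inl rfl
      · exact Or.inr ⟨_, (hM.gu H hn).mono (Nat.mul_le_mul_left _ (by omega))⟩
  | @insert F 𝓕 _ _ ih =>
    obtain ⟨n, hn⟩ := ih
    refine ⟨n + (h * c + h * c + n) + (h * c + n), fun M hM hF => ?_⟩
    have free : ∀ M', good 𝒞 ρ α e h M' → (∀ X Y Z, Fac c M' X Y Z → pr Y ∈ insert F 𝓕) →
        (∀ X Y Z, Fac c M' X Y Z → pr Y ≠ F) → GG 𝒞 ρ n (wd M') := by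
      intro M' h1 h2 h3
      exact hn M' h1 (fun X Y Z hh => (h2 X Y Z hh).resolve_left (h3 X Y Z hh))
    by_cases hc1 : ∀ X Y Z, Fac c M X Y Z → pr Y ≠ F
    · exact (free M hM hF hc1).mono (by omega)
    push Not at hc1
    have ex1 : ∃ k, ∃ X Y Z, Fac c M X Y Z ∧ pr Y = F ∧ X.length = k := by
      obtain ⟨X, Y, Z, h1, h2⟩ := hc1
      exact ⟨_, X, Y, Z, h1, h2, rfl⟩
    classical
    obtain ⟨X, Y, Z, ⟨rfl, hY1, hY2, hY3⟩, hYF, hXl⟩ := Nat.find_spec ex1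
    have hmin := fun k (hk : k < Nat.find ex1) => Nat.find_min ex1 hk
    rw [← hXl] at hmin
    have gX : good 𝒞 ρ α e h X := fun p hp => hM p (by simp [hp])
    have gY : good 𝒞 ρ α e h Y := fun p hp => hM p (by simp [hp])
    have gZ : good 𝒞 ρ α e h Z := fun p hp => hM p (by simp [hp])
    have bX : GG 𝒞 ρ n (wd X) := by
      refine free X gX ?_ ?_
      · rintro X1 Y1 Z1 ⟨rfl, h2⟩
        exact hF X1 Y1 (Z1 ++ (Y ++ Z)) ⟨by simp, h2⟩
      · rintro X1 Y1 Z1 ⟨rfl, h2⟩ hc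
        refine hmin X1.length ?_ ⟨X1, Y1, Z1 ++ (Y ++ Z), ⟨by simp, h2⟩, hc, rfl⟩
        have := List.length_pos_iff.2 h2.1
        simp; omega
    have bY : GU 𝒞 ρ (h * c) (wd Y) F := by
      rw [← hYF]
      exact (gY.gu H hY1).mono (Nat.mul_le_mul_left _ hY2)
    have hFZ : ∀ X' Y' Z', Fac c Z X' Y' Z' → pr Y' ∈ insert F 𝓕 := by
      rintro X1 Y1 Z1 ⟨rfl, h2⟩
      exact hF (X ++ (Y ++ X1)) Y1 Z1 ⟨by simp, h2⟩
    rw [wd_app, wd_app]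
    by_cases hc2 : ∀ X' Y' Z', Fac c Z X' Y' Z' → pr Y' ≠ F
    · have bZ := free Z gZ hFZ hc2
      exact (GG.mul H bX (GG.mul H (Or.inr ⟨_, bY⟩) bZ)).mono (by omega)
    push Not at hc2
    have ex2 : ∃ k, ∃ X' Y' Z', Fac c Z X' Y' Z' ∧ pr Y' = F ∧ Z'.length = k := by
      obtain ⟨X, Y, Z, h1, h2⟩ := hc2
      exact ⟨_, X, Y, Z, h1, h2, rfl⟩
    obtain ⟨X', Y', Z', ⟨rfl, hY1', hY2', hY3'⟩, hYF', hZl⟩ := Nat.find_spec ex2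
    have hmin2 := fun k (hk : k < Nat.find ex2) => Nat.find_min ex2 hk
    rw [← hZl] at hmin2
    have gX' : good 𝒞 ρ α e h X' := fun p hp => gZ p (by simp [hp])
    have gY' : good 𝒞 ρ α e h Y' := fun p hp => gZ p (by simp [hp])
    have gZ' : good 𝒞 ρ α e h Z' := fun p hp => gZ p (by simp [hp])
    have bZ' : GG 𝒞 ρ n (wd Z') := by
      refine free Z' gZ' ?_ ?_
      · rintro X1 Y1 Z1 ⟨rfl, h2⟩
        exact hFZ (X' ++ (Y' ++ X1)) Y1 Z1 ⟨by simp, h2⟩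
      · rintro X1 Y1 Z1 ⟨rfl, h2⟩ hc
        refine hmin2 Z1.length ?_ ⟨X' ++ (Y' ++ X1), Y1, Z1, ⟨by simp, h2⟩, hc, rfl⟩
        have := List.length_pos_iff.2 h2.1
        simp; omega
    have bY' : GU 𝒞 ρ (h * c) (wd Y') F := by
      rw [← hYF']
      exact (gY'.gu H hY1').mono (Nat.mul_le_mul_left _ hY2')
    have aY := gY.al hone hhom he hY1
    have aY' := gY'.al hone hhom he hY1'
    have hFF : F * F = F := by rw [← hYF]; exact hY3
    have mid : GG 𝒞 ρ (h * c + h * c) (wd Y ++ (wd X' ++ wd Y')) := by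
      by_cases hX' : X' = []
      · subst hX'
        exact Or.inr ⟨_, GU.mul H bY bY'⟩
      · have aX' := gX'.al hone hhom he hX'
        obtain ⟨p1, p2⟩ := hα _ _ (aX'.trans aY.symm)
        obtain ⟨q1, q2⟩ := hα _ _ (aY'.trans aY.symm)
        obtain ⟨s1, s2⟩ := hα (wd Y ++ wd Y) (wd Y) (by rw [hhom, aY, he])
        exact Or.inr (GU.clos H p1 q1 s1 p2 q2 (by rw [← H.word, s2]) hFF bY bY')
    have := GG.mul H bX (GG.mul H mid bZ')
    rw [wd_app, wd_app]
    have e1 : wd X ++ (wd Y ++ (wd X' ++ wd Y') ++ wd Z') =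
        wd X ++ (wd Y ++ (wd X' ++ (wd Y' ++ wd Z'))) := by simp
    rw [e1] at this
    exact this.mono (by omega)

theorem GG.idem [Finite R] (H : Hyp 𝒞 ρ) (hone : α [] = 1)
    (hhom : ∀ u v, α (u ++ v) = α u * α v)
    (hα : ∀ u v, α u = α v → ceq 𝒞 u v ∧ ρ {u} = ρ {v}) (he : e * e = e)
    (X : Set (List A)) (hX : Bdd (GG 𝒞 ρ) X) (hXe : ∀ w ∈ X, α w = e) :
    Bdd (GG 𝒞 ρ) {w | Star X w} := by
  obtain ⟨h, hh⟩ := hX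
  obtain ⟨c, hc⟩ := idem_factor (Set R)
  obtain ⟨n, hn⟩ := iter_aux (h := h) H hone hhom hα he c hc Set.univ (Set.toFinite _)
  refine ⟨n, fun w hw => ?_⟩
  have : ∃ M, good 𝒞 ρ α e h M ∧ wd M = w := by
    induction hw with
    | nil => exact ⟨[], by simp [good], rfl⟩
    | @snoc u b _ hb ih =>
      obtain ⟨M, hM, rfl⟩ := ih
      rcases hh b hb with rfl | ⟨U, hU⟩
      · exact ⟨M, hM, by simp⟩
      · refine ⟨M ++ [(b, U)], ?_, by simp [wd]⟩
        intro p hp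
        rcases List.mem_append.1 hp with hp | hp
        · exact hM p hp
        · rw [List.mem_singleton.1 hp]
          exact ⟨hU, hXe b hb⟩
  obtain ⟨M, hM, rfl⟩ := this
  exact hn M hM (fun _ _ _ _ => Set.mem_univ _)

end Iter

theorem GG.all [Finite R] (H : Hyp 𝒞 ρ) : ∃ h, ∀ w, GG 𝒞 ρ h w := by
  haveI : Finite 𝒞 := H.fin
  haveI : Finite (Function.End 𝒞) := inferInstanceAs (Finite (𝒞 → 𝒞))
  haveI : Finite (Function.End 𝒞)ᵐᵒᵖ := Finite.of_equiv _ MulOpposite.opEquiv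
  let q : List A → Function.End 𝒞 := fun w L => ⟨{u | w ++ u ∈ L.1}, (H.qc L.1 L.2 w).1⟩
  let α : List A → (Function.End 𝒞)ᵐᵒᵖ × R := fun w => (MulOpposite.op (q w), ρ {w})
  have hone : α [] = 1 := by
    refine Prod.ext ?_ H.mult.1
    rfl
  have hhom : ∀ u v, α (u ++ v) = α u * α v := by
    intro u v
    refine Prod.ext ?_ (H.word u v)
    show MulOpposite.op (q (u ++ v)) = MulOpposite.op (q v * q u)
    congr 1
    funext L
    apply Subtype.ext
    ext x
    show u ++ v ++ x ∈ L.1 ↔ u ++ (v ++ x) ∈ L.1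
    rw [List.append_assoc]
  have hα : ∀ u v, α u = α v → ceq 𝒞 u v ∧ ρ {u} = ρ {v} := by
    intro u v h
    refine ⟨?_, congrArg Prod.snd h⟩
    have h1 : q u = q v := MulOpposite.op_injective (congrArg Prod.fst h)
    intro L hL
    have h2 := congrArg Subtype.val (congrFun h1 ⟨L, hL⟩)
    have h3 : ([] ∈ {x | u ++ x ∈ L}) ↔ ([] ∈ {x | v ++ x ∈ L}) := by
      rw [show {x | u ++ x ∈ L} = {x | v ++ x ∈ L} from h2]
    simpa using h3
  have hax : CostAx α (GG 𝒞 ρ) :=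
    { one := hone
      hom := hhom
      nil := Or.inl rfl
      mono := fun hh hw => hw.mono hh
      mul := fun h1 h2 => GG.mul H h1 h2
      idem := fun e he X hX hXe => GG.idem H hone hhom hα he X hX hXe }
  exact hax.all (fun a => Or.inr ⟨_, GU.letter H a⟩)

theorem exists_N [Finite A] [Finite R] (H : Hyp 𝒞 ρ) :
    ∃ n, ∀ w, Rbpol 𝒞 ρ (PS 𝒞 ρ) (cclass 𝒞 w) (ρ {w}) {ρ (kc 𝒞 n w)} := by
  obtain ⟨k0, hk⟩ := exists_k0 H
  obtain ⟨h, hh⟩ := GG.all H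
  refine ⟨k0 + h, fun w => ?_⟩
  have heps := rb_eps H
  rcases hh w with rfl | ⟨U, a, l, h1, h2, h3, h4, h5⟩
  · rw [H.mult.1]
    refine heps.down ?_
    rintro _ rfl
    exact ⟨_, hk [] _ (H.rmono (kc_anti (by omega) [])), H.refl _⟩
  · have h6 := rb_mul H h5 (by rw [H.mult.1]; exact heps)
    rw [List.append_nil] at h6
    refine h6.down ?_
    rintro _ rfl
    have h7 : w ∈ plang ((cclass 𝒞 [], a) :: l) (cclass 𝒞 []) := by
      have := plang_cat _ (cclass 𝒞 []) h3 ceq.rfl'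
      simpa using this
    obtain ⟨s, hs, hs'⟩ := vp_bound H hk (cclass 𝒞 []) ⟨[], rfl⟩ _ (by
      intro p hp
      rcases List.mem_cons.1 hp with rfl | hp
      · exact ⟨[], rfl⟩
      · exact h2 p hp) w h7
    rw [Vp_one] at hs
    exact ⟨s, Set.mul_subset_mul_right h4 hs,
      rle_trans (H.rmono (kc_anti (by simp; omega) w)) hs'⟩

theorem completeness [Finite A] [Finite R] (H : Hyp 𝒞 ρ) : BPolSaturated 𝒞 ρ (PS 𝒞 ρ) := by
  refine ⟨fun p hp => hp.1, ?_⟩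
  rintro ⟨D, r⟩ ⟨⟨w0, hw0⟩, hr⟩
  simp only at hw0 hr
  subst hw0
  obtain ⟨n, hn⟩ := exists_N H
  obtain ⟨_, ⟨w, hw, rfl⟩, hrw⟩ := hr (kc 𝒞 n '' cclass 𝒞 w0)
    ⟨⟨(kc_finite H.fin H.ba n).subset (Set.image_subset_range _ _),
      fun w hw => ⟨_, ⟨w, hw, rfl⟩, le.refl, le.refl⟩⟩, by
      rintro _ ⟨w, _, rfl⟩; exact kc_bool H.fin H.ba H.qc n w⟩
  obtain ⟨l, hl, hl'⟩ := H.nice (kc 𝒞 n w)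
  have hwk : w ∈ kc 𝒞 n w := ⟨le.refl, le.refl⟩
  have hsum : (((w :: l).map fun w => ρ {w}).sum) = ρ (kc 𝒞 n w) := by
    rw [List.map_cons, List.sum_cons, ← hl']
    exact H.rmono (by rintro _ rfl; exact hwk)
  refine ⟨(w :: l).map fun w => ρ {w}, by simp, by rw [hsum]; exact hrw, ?_⟩
  intro s hs
  rw [hsum]
  obtain ⟨v, hv, rfl⟩ := List.mem_map.1 hs
  have hv' : v ∈ kc 𝒞 n w := by
    rcases List.mem_cons.1 hv with rfl | hv
    · exact hwk
    · exact hl v hv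
  have := hn v
  rw [kc_eq hv'] at this
  rw [show cclass 𝒞 w0 = cclass 𝒞 v from cclass_eq (ceq.trans' hw hv'.1.ceq)]
  exact this

end Complete

/-- For a finite quotienting Boolean algebra `𝒞` and a nice
multiplicative rating map `ρ`, the set
`P = {(D, r) : D a ∼_𝒞-class, r ∈ I_{BPol(𝒞)}[D, ρ]}` is the greatest
`BPol(𝒞)`-saturated subset of `(A*/∼_𝒞) × R`. -/
theorem statement17 {A R : Type} [Fintype A] [Semiring R] [Finite R]
    (hidem : ∀ r : R, r + r = r)
    (𝒞 : LClass A) (hfin : 𝒞.Finite) (hba : LangBoolAlg 𝒞)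
    (hqc : QuotientClosed 𝒞)
    (ρ : Lang A → R) (hρ : IsRatingMap ρ) (hmult : IsMultiplicative ρ)
    (hnice : IsNice ρ) :
    BPolSaturated 𝒞 ρ
      {p : Lang A × R | IsCClass 𝒞 p.1 ∧
        p.2 ∈ optImprint (BoolC (PolC 𝒞)) ρ p.1} ∧
    ∀ S : Set (Lang A × R), BPolSaturated 𝒞 ρ S →
      S ⊆ {p : Lang A × R | IsCClass 𝒞 p.1 ∧
        p.2 ∈ optImprint (BoolC (PolC 𝒞)) ρ p.1} := by
  have H : Hyp 𝒞 ρ := ⟨hidem, hfin, hba, hqc, hρ, hmult, hnice⟩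
  exact ⟨completeness H, fun S hS => soundness H hS⟩

end Paper
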